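/- arXiv:1507.02736 — 6 statements merged into one kernel-verified Lean document; each statement's English description precedes it below -/
import Mathlib

section
/- Let 1 < d < D − 1 be integers, let P be an orthogonal projection of rank d on ℂ^D, and let φ, ψ ∈ ℂ^D be two fixed orthonormal vectors. Let 0 ≤ a ≤ 1/4. Then the Haar probability of the set of U ∈ U(D) with |⟨φ, U P U⁻¹ ψ⟩|² ≥ a equals ((D−1)!/((d−1)!·(D−d−1)!)) · ∫_{1/2 − √(1/4 − a)}^{1/2 + √(1/4 − a)} (w·(1−w) − a)^{D−2} / ( w^{D−d−1}·(1−w)^{d−1} ) dw. -/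
open MeasureTheory Filter

noncomputable section

/-- The unitary group U(D) of ℂ^D. -/
abbrev UG (D : ℕ) := Matrix.unitaryGroup (Fin D) ℂ

instance (D : ℕ) : MeasurableSpace (UG D) := borel _
instance (D : ℕ) : BorelSpace (UG D) := ⟨rfl⟩

/-- The squared euclidean norm ‖v‖² on ℂ^D. -/
def nsq {D : ℕ} (v : Fin D → ℂ) : ℝ := ∑ i, ‖v i‖ ^ 2

/-- The hermitian inner product ⟨v,w⟩ on ℂ^D (conjugate-linear in the first variable). -/
def dotc {D : ℕ} (v w : Fin D → ℂ) : ℂ := ∑ i, (starRingEnd ℂ) (v i) * w i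

/-- The orthogonal projection U P U⁻¹ onto the image under U of the range of P. -/
def rotProj {D : ℕ} (U : UG D) (P : Matrix (Fin D) (Fin D) ℂ) : Matrix (Fin D) (Fin D) ℂ :=
  (U : Matrix (Fin D) (Fin D) ℂ) * P * ((U⁻¹ : UG D) : Matrix (Fin D) (Fin D) ℂ)

/-!
For Haar-distributed `U`, the vectors `U⁻¹ φ` and `U⁻¹ ψ` form a uniformly random orthonormal pair,
which can be realized as the Gram–Schmidt orthonormalization `g', h'` of two independent standard
Gaussian vectors `g, h` of `ℂ^D`; the overlap `⟨φ, U P U⁻¹ ψ⟩` then becomes `⟨g', P h'⟩`. Since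
`h'` is orthogonal to `g`, only the component `w` of `P g'` orthogonal to `g` matters, and
`‖w‖² = t (1 - t)` with `t = ‖P g‖² / ‖g‖²`. As a ratio of Gamma variables, `t` has the Beta law
with parameters `d` and `D - d`. Given `g`, the vector `h'` is uniform on the unit sphere of
`g^⊥ ≃ ℂ^(D-1)`, so `|⟨w, h'⟩|² / ‖w‖²` has the Beta law with parameters `1` and `D - 2`, and
`|⟨w, h'⟩|² ≥ a` has conditional probability `(1 - a / (t (1 - t)))^(D-2)` as soon as
`a ≤ t (1 - t)`. Integrating against the law of `t` gives the formula.
-/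

open ProbabilityTheory Module
open scoped ENNReal InnerProductSpace

/-! ### Gamma and Beta distributions -/

section BetaGamma

variable {a b r : ℝ}

lemma measurable_gammaPDF (a r : ℝ) : Measurable (gammaPDF a r) :=
  (measurable_gammaPDFReal a r).ennreal_ofReal

lemma measurable_betaPDF (a b : ℝ) : Measurable (betaPDF a b) :=
  (measurable_betaPDFReal a b).ennreal_ofReal

lemma gammaPDFReal_mul_gammaPDFReal (ha : 0 < a) (hb : 0 < b) (hr : 0 < r) {s u : ℝ}
    (hs : 0 < s) (hu₀ : 0 < u) (hu₁ : u < 1) :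
    s * (gammaPDFReal a r (s * u) * gammaPDFReal b r (s - s * u)) =
      betaPDFReal a b u * gammaPDFReal (a + b) r s := by
  have hsu : s - s * u = s * (1 - u) := by ring
  have hu : 0 < 1 - u := sub_pos.2 hu₁
  have hexp : Real.exp (-(r * s)) =
      Real.exp (-(r * (s * u))) * Real.exp (-(r * (s * (1 - u)))) := by
    rw [← Real.exp_add]; ring_nf
  have hpow : s ^ (a + b - 1) = s * (s ^ (a - 1) * s ^ (b - 1)) := by
    rw [show a + b - 1 = 1 + ((a - 1) + (b - 1)) by ring, Real.rpow_add hs, Real.rpow_one,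
      Real.rpow_add hs]
  have := Real.Gamma_pos_of_pos ha
  have := Real.Gamma_pos_of_pos hb
  have := Real.Gamma_pos_of_pos (add_pos ha hb)
  rw [hsu, gammaPDFReal, gammaPDFReal, gammaPDFReal, betaPDFReal, if_pos (by positivity),
    if_pos (by positivity), if_pos hs.le, if_pos ⟨hu₀, hu₁⟩, hexp, hpow, beta,
    Real.mul_rpow hs.le hu₀.le, Real.mul_rpow hs.le hu.le, Real.rpow_add hr]
  field_simp

lemma gammaPDF_mul_gammaPDF (ha : 0 < a) (hb : 0 < b) (hr : 0 < r) {s u : ℝ}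
    (hs : s ≠ 0) (hu₀ : u ≠ 0) (hu₁ : u ≠ 1) :
    ENNReal.ofReal |s| * (gammaPDF a r (s * u) * gammaPDF b r (s - s * u)) =
      betaPDF a b u * gammaPDF (a + b) r s := by
  rcases hs.lt_or_gt with hs | hs
  · rw [gammaPDF_of_neg hs]
    rcases hu₀.lt_or_gt with hu | hu
    · rw [gammaPDF_of_neg (x := s - s * u) (by nlinarith)]; simp
    · rw [gammaPDF_of_neg (x := s * u) (by nlinarith)]; simp
  rcases hu₀.lt_or_gt with hu | hu
  · rw [gammaPDF_of_neg (x := s * u) (by nlinarith), betaPDF_eq_zero_of_nonpos hu.le]; simp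
  rcases hu₁.lt_or_gt with hu' | hu'
  · rw [gammaPDF, gammaPDF, gammaPDF, betaPDF, abs_of_pos hs,
      ← ENNReal.ofReal_mul (gammaPDFReal_nonneg ha hr _), ← ENNReal.ofReal_mul hs.le,
      ← ENNReal.ofReal_mul (betaPDFReal_pos hu hu' ha hb).le,
      gammaPDFReal_mul_gammaPDFReal ha hb hr hs hu hu']
  · rw [gammaPDF_of_neg (x := s - s * u) (by nlinarith), betaPDF_eq_zero_of_one_le hu'.le]; simp

lemma lintegral_eq_ofReal_abs_mul_lintegral_comp_mul_left {f : ℝ → ℝ≥0∞} (hf : Measurable f)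
    {s : ℝ} (hs : s ≠ 0) : ∫⁻ x, f x = ENNReal.ofReal |s| * ∫⁻ u, f (s * u) := by
  conv_lhs => rw [← Real.smul_map_volume_mul_left hs]
  rw [lintegral_smul_measure, lintegral_map hf (by fun_prop), smul_eq_mul]

-- The change of variables is `(x, y) = (s * u, s - s * u)`, carried out one variable at a time.
lemma map_div_add_gammaMeasure_prod (ha : 0 < a) (hb : 0 < b) (hr : 0 < r) :
    ((gammaMeasure a r).prod (gammaMeasure b r)).map (fun p ↦ (p.1 / (p.1 + p.2), p.1 + p.2)) =
      (betaMeasure a b).prod (gammaMeasure (a + b) r) := by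
  have := measurable_gammaPDF
  have := measurable_betaPDF
  rw [gammaMeasure, gammaMeasure, gammaMeasure, betaMeasure, prod_withDensity (by fun_prop)
    (by fun_prop), prod_withDensity (by fun_prop) (by fun_prop)]
  refine Measure.ext_of_lintegral _ fun f hf ↦ ?_
  rw [lintegral_map hf (by fun_prop), lintegral_withDensity_eq_lintegral_mul _ (by fun_prop)
    (by fun_prop), lintegral_withDensity_eq_lintegral_mul _ (by fun_prop) (by fun_prop)]
  calc ∫⁻ p : ℝ × ℝ, gammaPDF a r p.1 * gammaPDF b r p.2 * f (p.1 / (p.1 + p.2), p.1 + p.2)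
      = ∫⁻ x, ∫⁻ y, gammaPDF a r x * gammaPDF b r y * f (x / (x + y), x + y) :=
        lintegral_prod _ (by fun_prop)
    _ = ∫⁻ x, ∫⁻ s, gammaPDF a r x * gammaPDF b r (s - x) * f (x / s, s) := by
        refine lintegral_congr fun x ↦ ?_
        rw [← lintegral_sub_right_eq_self _ x]
        simp only [add_sub_cancel]
    _ = ∫⁻ s, ∫⁻ x, gammaPDF a r x * gammaPDF b r (s - x) * f (x / s, s) :=
        lintegral_lintegral_swap (by fun_prop)
    _ = ∫⁻ s, ∫⁻ u, betaPDF a b u * gammaPDF (a + b) r s * f (u, s) := by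
        refine lintegral_congr_ae ?_
        filter_upwards [Measure.ae_ne volume 0] with s hs
        rw [lintegral_eq_ofReal_abs_mul_lintegral_comp_mul_left (by fun_prop) hs,
          ← lintegral_const_mul _ (by fun_prop)]
        refine lintegral_congr_ae ?_
        filter_upwards [Measure.ae_ne volume 0, Measure.ae_ne volume 1] with u hu₀ hu₁
        rw [← gammaPDF_mul_gammaPDF ha hb hr hs hu₀ hu₁, mul_div_cancel_left₀ u hs]
        ring
    _ = ∫⁻ u, ∫⁻ s, betaPDF a b u * gammaPDF (a + b) r s * f (u, s) :=
        lintegral_lintegral_swap (by fun_prop)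
    _ = ∫⁻ p : ℝ × ℝ, betaPDF a b p.1 * gammaPDF (a + b) r p.2 * f p :=
        (lintegral_prod (fun p : ℝ × ℝ ↦ betaPDF a b p.1 * gammaPDF (a + b) r p.2 * f p)
          (by fun_prop)).symm

lemma map_add_gammaMeasure_prod (ha : 0 < a) (hb : 0 < b) (hr : 0 < r) :
    ((gammaMeasure a r).prod (gammaMeasure b r)).map (fun p ↦ p.1 + p.2) =
      gammaMeasure (a + b) r := by
  have := isProbabilityMeasureBeta ha hb
  have := isProbabilityMeasure_gammaMeasure (add_pos ha hb) hr
  have h := congrArg Measure.snd (map_div_add_gammaMeasure_prod ha hb hr)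
  rwa [Measure.snd, Measure.map_map measurable_snd (by fun_prop), Measure.snd_prod] at h

lemma map_div_gammaMeasure_prod (ha : 0 < a) (hb : 0 < b) (hr : 0 < r) :
    ((gammaMeasure a r).prod (gammaMeasure b r)).map (fun p ↦ p.1 / (p.1 + p.2)) =
      betaMeasure a b := by
  have := isProbabilityMeasureBeta ha hb
  have := isProbabilityMeasure_gammaMeasure (add_pos ha hb) hr
  have h := congrArg Measure.fst (map_div_add_gammaMeasure_prod ha hb hr)
  rwa [Measure.fst, Measure.map_map measurable_fst (by fun_prop), Measure.fst_prod] at h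

lemma betaMeasure_one_Ici {β : ℝ} (hβ : 0 < β) {c : ℝ} (hc₀ : 0 ≤ c) (hc₁ : c ≤ 1) :
    betaMeasure 1 β (Set.Ici c) = ENNReal.ofReal ((1 - c) ^ β) := by
  have h_beta : 1 / beta 1 β = β := by
    rw [beta, Real.Gamma_one, add_comm, Real.Gamma_add_one hβ.ne']
    have := Real.Gamma_pos_of_pos hβ
    field_simp
  have h_int : IntervalIntegrable (fun x ↦ β * (1 - x) ^ (β - 1)) volume c 1 := by
    have := (intervalIntegral.intervalIntegrable_rpow' (a := 1 - c) (b := 0) (r := β - 1)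
      (by linarith)).comp_sub_left 1
    simpa using this.const_mul β
  have h_pdf : (betaPDF 1 β).support ⊆ Set.Iio 1 := fun x hx ↦
    Set.mem_Iio.2 <| not_le.1 fun hx_one ↦ hx <| betaPDF_eq_zero_of_one_le hx_one
  calc betaMeasure 1 β (Set.Ici c)
      = ∫⁻ x in Set.Iio 1 ∩ Set.Ioi c, betaPDF 1 β x := by
        rw [betaMeasure, withDensity_apply _ measurableSet_Ici,
          setLIntegral_congr Ioi_ae_eq_Ici.symm, ← Measure.restrict_restrict measurableSet_Iio,
          setLIntegral_eq_of_support_subset h_pdf]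
    _ = ∫⁻ x in Set.Ioo c 1, ENNReal.ofReal (β * (1 - x) ^ (β - 1)) := by
        rw [Set.inter_comm, Set.Ioi_inter_Iio]
        refine setLIntegral_congr_fun measurableSet_Ioo fun x hx ↦ ?_
        simp only [betaPDF_of_pos_lt_one (hc₀.trans_lt hx.1) hx.2, h_beta, sub_self, Real.rpow_zero,
          mul_one]
    _ = ENNReal.ofReal (∫ x in c..1, β * (1 - x) ^ (β - 1)) := by
        rw [intervalIntegral.integral_of_le hc₁, integral_Ioc_eq_integral_Ioo,
          ofReal_integral_eq_lintegral_ofReal]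
        · exact (intervalIntegrable_iff_integrableOn_Ioo_of_le hc₁).1 h_int
        · filter_upwards [ae_restrict_mem measurableSet_Ioo] with x hx
          exact mul_nonneg hβ.le (Real.rpow_nonneg (sub_nonneg.2 hx.2.le) _)
    _ = ENNReal.ofReal ((1 - c) ^ β) := by
        rw [intervalIntegral.integral_const_mul,
          intervalIntegral.integral_comp_sub_left (fun x ↦ x ^ (β - 1)) 1, sub_self,
          integral_rpow (Or.inl (by linarith)), sub_add_cancel, Real.zero_rpow hβ.ne', sub_zero,
          mul_div_cancel₀ _ hβ.ne']

lemma ae_betaMeasure_mem_Ioo (α β : ℝ) : ∀ᵐ t ∂betaMeasure α β, t ∈ Set.Ioo 0 1 := by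
  rw [betaMeasure, ae_withDensity_iff (measurable_betaPDF α β)]
  refine ae_of_all _ fun t ht ↦ ⟨not_le.1 fun h ↦ ht ?_, not_le.1 fun h ↦ ht ?_⟩
  exacts [betaPDF_eq_zero_of_nonpos h, betaPDF_eq_zero_of_one_le h]

end BetaGamma

/-! ### Standard Gaussian vectors -/

lemma lintegral_eq_two_mul_setLIntegral_Ioi_of_even {f : ℝ → ℝ≥0∞} (hf : f.Even) :
    ∫⁻ x, f x = 2 * ∫⁻ x in Set.Ioi 0, f x := by
  have h_neg : ∫⁻ x in Set.Iio 0, f x = ∫⁻ x in Set.Ioi 0, f x := by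
    have h := (Measure.measurePreserving_neg (volume : Measure ℝ)).setLIntegral_comp_emb
      (MeasurableEquiv.neg ℝ).measurableEmbedding f (Set.Ioi 0)
    simpa only [hf.eq, Set.image_neg_eq_neg, Set.neg_Ioi, neg_zero] using h.symm
  rw [← lintegral_add_compl f measurableSet_Ioi (A := Set.Ioi 0), Set.compl_Ioi,
    setLIntegral_congr Iio_ae_eq_Iic.symm, h_neg, two_mul]

lemma setLIntegral_Ioi_eq_setLIntegral_comp_sq (f : ℝ → ℝ≥0∞) :
    ∫⁻ y in Set.Ioi 0, f y = ∫⁻ x in Set.Ioi 0, ENNReal.ofReal (2 * x) * f (x ^ 2) := by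
  have h_image : (fun x : ℝ ↦ x ^ 2) '' Set.Ioi 0 = Set.Ioi 0 := by
    ext y
    refine ⟨?_, fun hy ↦ ⟨√y, Real.sqrt_pos.2 hy, Real.sq_sqrt hy.le⟩⟩
    rintro ⟨x, hx, rfl⟩
    exact pow_pos (Set.mem_Ioi.1 hx) 2
  have h_inj : Set.InjOn (fun x : ℝ ↦ x ^ 2) (Set.Ioi 0) := fun x hx y hy h ↦
    (pow_left_inj₀ (Set.mem_Ioi.1 hx).le (Set.mem_Ioi.1 hy).le two_ne_zero).1 h
  have h_deriv : ∀ x ∈ Set.Ioi (0 : ℝ), HasDerivWithinAt (fun x ↦ x ^ 2) (2 * x) (Set.Ioi 0) x :=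
    fun x _ ↦ by simpa using (hasDerivAt_pow 2 x).hasDerivWithinAt
  conv_lhs => rw [← h_image]
  rw [lintegral_image_eq_lintegral_abs_deriv_mul measurableSet_Ioi h_deriv h_inj]
  exact setLIntegral_congr_fun measurableSet_Ioi fun x hx ↦ by
    simp only [abs_of_pos (mul_pos two_pos (Set.mem_Ioi.1 hx))]

lemma two_mul_gaussianPDF_eq_gammaPDF_sq {x : ℝ} (hx : 0 < x) :
    2 * gaussianPDF 0 1 x = ENNReal.ofReal (2 * x) * gammaPDF (1 / 2) (1 / 2) (x ^ 2) := by
  have h_pow : (x ^ 2) ^ (1 / 2 - 1 : ℝ) = x⁻¹ := by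
    rw [← Real.rpow_natCast_mul hx.le, ← Real.rpow_neg_one]
    norm_num
  have h_half : (1 / 2 : ℝ) ^ (1 / 2 : ℝ) = (√2)⁻¹ := by
    rw [← Real.sqrt_eq_rpow, one_div, Real.sqrt_inv]
  rw [gaussianPDF, gammaPDF, gaussianPDFReal, gammaPDFReal, if_pos (sq_nonneg x), h_pow, h_half,
    Real.Gamma_one_half_eq, ← ENNReal.ofReal_mul (by positivity),
    ← ENNReal.ofReal_ofNat 2, ← ENNReal.ofReal_mul zero_le_two, NNReal.coe_one,
    Real.sqrt_mul (by positivity), Real.sqrt_mul zero_le_two, Real.sqrt_one]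
  congr 1
  field_simp
  ring_nf

lemma map_sq_gaussianReal :
    (gaussianReal 0 1).map (· ^ 2) = gammaMeasure (1 / 2) (1 / 2) := by
  have := measurable_gammaPDF
  refine Measure.ext_of_lintegral _ fun f hf ↦ ?_
  rw [lintegral_map hf (by fun_prop), gaussianReal_of_var_ne_zero 0 one_ne_zero, gammaMeasure,
    lintegral_withDensity_eq_lintegral_mul _ (measurable_gaussianPDF 0 1) (by fun_prop),
    lintegral_withDensity_eq_lintegral_mul _ (by fun_prop) hf]
  have h_even : (gaussianPDF 0 1 * fun x ↦ f (x ^ 2)).Even := fun x ↦ by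
    simp [gaussianPDF, gaussianPDFReal]
  have h_supp : (gammaPDF (1 / 2) (1 / 2) * f).support ⊆ Set.Ici 0 := fun y hy ↦ Set.mem_Ici.2 <|
    not_lt.1 fun hy_neg ↦ hy <| by simp [gammaPDF_of_neg hy_neg]
  calc ∫⁻ x, (gaussianPDF 0 1 * fun x ↦ f (x ^ 2)) x
      = ∫⁻ x in Set.Ioi 0, 2 * (gaussianPDF 0 1 x * f (x ^ 2)) := by
        rw [lintegral_eq_two_mul_setLIntegral_Ioi_of_even h_even, ← lintegral_const_mul _
          ((measurable_gaussianPDF 0 1).mul (by fun_prop))]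
        rfl
    _ = ∫⁻ x in Set.Ioi 0,
          ENNReal.ofReal (2 * x) * (gammaPDF (1 / 2) (1 / 2) * f) (x ^ 2) :=
        setLIntegral_congr_fun measurableSet_Ioi fun x hx ↦ by
          simp only [Pi.mul_apply, ← mul_assoc, two_mul_gaussianPDF_eq_gammaPDF_sq hx]
    _ = ∫⁻ y, (gammaPDF (1 / 2) (1 / 2) * f) y := by
        rw [← setLIntegral_Ioi_eq_setLIntegral_comp_sq, setLIntegral_congr Ioi_ae_eq_Ici,
          setLIntegral_eq_of_support_subset h_supp]

lemma map_sum_pi_gammaMeasure {n : ℕ} {a : Fin (n + 1) → ℝ} {r : ℝ} (ha : ∀ i, 0 < a i)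
    (hr : 0 < r) :
    (Measure.pi fun i ↦ gammaMeasure (a i) r).map (fun x ↦ ∑ i, x i) =
      gammaMeasure (∑ i, a i) r := by
  have hγ (i) := isProbabilityMeasure_gammaMeasure (ha i) hr
  induction n with
  | zero =>
    have h := (measurePreserving_piUnique (ι := Fin 1) fun i ↦ gammaMeasure (a i) r).map_eq
    simpa [MeasurableEquiv.piUnique] using h
  | succ n ih =>
    have h_split := measurePreserving_piFinSuccAbove (fun i ↦ gammaMeasure (a i) r) 0
    have h_tail := ih (fun i ↦ ha i.succ) (fun i ↦ hγ i.succ)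
    have h_sum : (fun x : Fin (n + 2) → ℝ ↦ ∑ i, x i) = (fun p : ℝ × ℝ ↦ p.1 + p.2) ∘
        Prod.map id (fun x ↦ ∑ i, x i) ∘ MeasurableEquiv.piFinSuccAbove (fun _ ↦ ℝ) 0 := by
      ext x
      simp [Fin.sum_univ_succ, Fin.tail]
    rw [h_sum, ← Measure.map_map (by fun_prop) (by fun_prop), ← Measure.map_map (by fun_prop)
      (by fun_prop), h_split.map_eq, ← Measure.map_prod_map _ _ measurable_id (by fun_prop),
      Measure.map_id]
    simp only [Fin.zero_succAbove]
    rw [h_tail, map_add_gammaMeasure_prod (ha 0) (Finset.sum_pos (fun i _ ↦ ha i.succ)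
      Finset.univ_nonempty) hr, ← Fin.sum_univ_succ]

section StdGaussian

variable {E F : Type*}
  [NormedAddCommGroup E] [InnerProductSpace ℝ E] [FiniteDimensional ℝ E]
  [MeasurableSpace E] [BorelSpace E]
  [NormedAddCommGroup F] [InnerProductSpace ℝ F] [FiniteDimensional ℝ F]
  [MeasurableSpace F] [BorelSpace F]

variable (E) in
lemma map_norm_sq_stdGaussian [Nontrivial E] :
    (stdGaussian E).map (fun x ↦ ‖x‖ ^ 2) = gammaMeasure (finrank ℝ E / 2) (1 / 2) := by
  obtain ⟨n, hn⟩ := Nat.exists_eq_succ_of_ne_zero (finrank_pos (R := ℝ) (M := E)).ne'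
  let b : OrthonormalBasis (Fin (n + 1)) ℝ E := (stdOrthonormalBasis ℝ E).reindex (finCongr hn)
  have h_norm : (fun x ↦ ‖x‖ ^ 2) ∘ (fun x : Fin (n + 1) → ℝ ↦ ∑ i, x i • b i) =
      (fun x : Fin (n + 1) → ℝ ↦ ∑ i, x i) ∘ fun x i ↦ x i ^ 2 := by
    ext x
    simp [← b.sum_sq_norm_inner_right, inner_sum, inner_smul_right, b.inner_eq_ite]
  have h_sq : (Measure.pi fun _ : Fin (n + 1) ↦ gaussianReal 0 1).map (fun x i ↦ x i ^ 2) =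
      Measure.pi fun _ ↦ gammaMeasure (1 / 2) (1 / 2) := by
    have := Measure.isProbabilityMeasure_map (μ := gaussianReal 0 1) (f := (· ^ 2)) (by fun_prop)
    rw [Measure.pi_map_pi (f := fun _ ↦ (· ^ 2)) (by fun_prop), map_sq_gaussianReal]
  rw [stdGaussian_eq_map_pi_orthonormalBasis b, Measure.map_map (by fun_prop) (by fun_prop), h_norm,
    ← Measure.map_map (by fun_prop) (by fun_prop), h_sq,
    map_sum_pi_gammaMeasure (fun _ ↦ by norm_num) (by norm_num), hn]
  simp [div_eq_mul_inv]

lemma ae_stdGaussian_ne_zero [Nontrivial E] : ∀ᵐ x ∂stdGaussian E, x ≠ 0 := by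
  have h : ∀ᵐ t ∂(stdGaussian E).map (fun x ↦ ‖x‖ ^ 2), t ≠ 0 := by
    rw [map_norm_sq_stdGaussian, gammaMeasure]
    exact (withDensity_absolutelyContinuous _ _).ae_le (Measure.ae_ne volume 0)
  exact (ae_of_ae_map (by fun_prop) h).mono fun x hx h ↦ hx <| by simp [h]

variable (E F) in
lemma stdGaussian_withLp_prod :
    stdGaussian (WithLp 2 (E × F)) =
      ((stdGaussian E).prod (stdGaussian F)).map (WithLp.toLp 2) := by
  refine Measure.ext_of_charFun (funext fun t ↦ ?_)
  rw [charFun_prod, charFun_stdGaussian, charFun_stdGaussian, charFun_stdGaussian,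
    ← Complex.exp_add, ← Complex.ofReal_pow, WithLp.prod_norm_sq_eq_of_L2]
  push_cast
  rw [← add_div, ← neg_add]
  rfl

end StdGaussian

section ComplexGaussian

lemma norm_inner_normalize_sq {E : Type*} [NormedAddCommGroup E] [InnerProductSpace ℂ E] (w y : E) :
    ‖⟪w, NormedSpace.normalize y⟫_ℂ‖ ^ 2 =
      ‖w‖ ^ 2 * (‖(ℂ ∙ w).starProjection y‖ ^ 2 / ‖y‖ ^ 2) := by
  rcases eq_or_ne w 0 with rfl | hw
  · simp
  have := norm_ne_zero_iff.2 hw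
  rw [NormedSpace.normalize, inner_smul_right_eq_smul, norm_smul,
    Submodule.starProjection_singleton, norm_smul]
  simp [field]

attribute [local instance] InnerProductSpace.complexToReal

variable {E : Type*} [NormedAddCommGroup E] [InnerProductSpace ℂ E] [FiniteDimensional ℂ E]
  [MeasurableSpace E] [BorelSpace E]

lemma map_orthogonalProjectionOnto_prod_stdGaussian (K : Submodule ℂ E) :
    (stdGaussian E).map
        (fun x ↦ (K.orthogonalProjectionOnto x, Kᗮ.orthogonalProjectionOnto x)) =
      (stdGaussian K).prod (stdGaussian Kᗮ) := by
  let e : E ≃ₗᵢ[ℝ] WithLp 2 (K × Kᗮ) :=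
    { K.orthogonalDecomposition.toLinearEquiv.restrictScalars ℝ with
      norm_map' := K.orthogonalDecomposition.norm_map }
  have h_toLp : (fun x ↦ (K.orthogonalProjectionOnto x, Kᗮ.orthogonalProjectionOnto x)) =
      WithLp.ofLp ∘ e :=
    funext fun _ ↦ congrArg WithLp.ofLp (K.orthogonalDecomposition_apply _).symm
  have h := stdGaussian_map e
  rw [stdGaussian_withLp_prod] at h
  rw [h_toLp, ← Measure.map_map (by fun_prop) (by fun_prop), h,
    Measure.map_map (by fun_prop) (by fun_prop)]
  exact Measure.map_id

lemma map_orthogonalProjectionOnto_orthogonal_stdGaussian (K : Submodule ℂ E) :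
    (stdGaussian E).map Kᗮ.orthogonalProjectionOnto = stdGaussian Kᗮ := by
  have h := congrArg Measure.snd (map_orthogonalProjectionOnto_prod_stdGaussian K)
  rwa [Measure.snd, Measure.map_map measurable_snd (by fun_prop), Measure.snd_prod] at h

variable (E) in
lemma map_norm_sq_stdGaussian_complex [Nontrivial E] :
    (stdGaussian E).map (fun x ↦ ‖x‖ ^ 2) = gammaMeasure (finrank ℂ E) (1 / 2) := by
  rw [map_norm_sq_stdGaussian, finrank_real_of_complex]
  simp

lemma map_norm_sq_starProjection_div_norm_sq_stdGaussian (K : Submodule ℂ E)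
    [Nontrivial K] [Nontrivial Kᗮ] :
    (stdGaussian E).map (fun x ↦ ‖K.starProjection x‖ ^ 2 / ‖x‖ ^ 2) =
      betaMeasure (finrank ℂ K) (finrank ℂ Kᗮ) := by
  have h_ratio : (fun x ↦ ‖K.starProjection x‖ ^ 2 / ‖x‖ ^ 2) =
      (fun p : ℝ × ℝ ↦ p.1 / (p.1 + p.2)) ∘
        Prod.map (fun x : K ↦ ‖x‖ ^ 2) (fun x : Kᗮ ↦ ‖x‖ ^ 2) ∘
        fun x ↦ (K.orthogonalProjectionOnto x, Kᗮ.orthogonalProjectionOnto x) := funext fun x ↦ by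
    rw [K.norm_sq_eq_add_norm_sq_projection x]
    rfl
  rw [h_ratio, ← Measure.map_map (by fun_prop) (by fun_prop),
    ← Measure.map_map (by fun_prop) (by fun_prop), map_orthogonalProjectionOnto_prod_stdGaussian,
    ← Measure.map_prod_map _ _ (by fun_prop) (by fun_prop), map_norm_sq_stdGaussian_complex,
    map_norm_sq_stdGaussian_complex,
    map_div_gammaMeasure_prod (mod_cast finrank_pos) (mod_cast finrank_pos) (by norm_num)]

lemma stdGaussian_norm_sq_starProjection_div_norm_sq_ge {K : Submodule ℂ E}
    (hK : finrank ℂ K = 1) {c : ℝ} (hc₀ : 0 ≤ c) (hc₁ : c ≤ 1) :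
    stdGaussian E {x | c ≤ ‖K.starProjection x‖ ^ 2 / ‖x‖ ^ 2} =
      ENNReal.ofReal ((1 - c) ^ (finrank ℂ E - 1)) := by
  have : Nontrivial K := nontrivial_of_finrank_pos (R := ℂ) (by omega)
  have h_finrank : finrank ℂ Kᗮ = finrank ℂ E - 1 := by
    have := K.finrank_add_finrank_orthogonal
    omega
  rcases subsingleton_or_nontrivial Kᗮ with hKo | hKo
  · have hK_top : K = ⊤ :=
      Submodule.orthogonal_eq_bot_iff.1 (Submodule.subsingleton_iff_eq_bot.1 hKo)
    have : Nontrivial E := K.subtype_injective.nontrivial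
    rw [← h_finrank, finrank_zero_of_subsingleton, pow_zero, ENNReal.ofReal_one,
      ← mem_ae_iff_prob_eq_one (measurableSet_le measurable_const (by fun_prop))]
    filter_upwards [ae_stdGaussian_ne_zero] with x hx
    have h_proj : K.starProjection x = x :=
      Submodule.starProjection_eq_self_iff.2 (hK_top ▸ Submodule.mem_top)
    rwa [h_proj, div_self (by simpa using hx)]
  · have h_law := map_norm_sq_starProjection_div_norm_sq_stdGaussian K
    rw [hK, h_finrank, Nat.cast_one] at h_law
    have h_pos : 0 < finrank ℂ E - 1 := h_finrank ▸ finrank_pos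
    rw [← Real.rpow_natCast, ← betaMeasure_one_Ici (mod_cast h_pos) hc₀ hc₁, ← h_law,
      Measure.map_apply (by fun_prop) measurableSet_Ici]
    rfl

lemma stdGaussian_norm_inner_normalize_sq_ge {w : E} (hw : w ≠ 0) {a : ℝ} (ha : 0 ≤ a) :
    stdGaussian E {y | a ≤ ‖⟪w, NormedSpace.normalize y⟫_ℂ‖ ^ 2} =
      if a ≤ ‖w‖ ^ 2 then ENNReal.ofReal ((1 - a / ‖w‖ ^ 2) ^ (finrank ℂ E - 1)) else 0 := by
  have hw_sq : 0 < ‖w‖ ^ 2 := by positivity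
  split_ifs with haw
  · have h_scale (y : E) : a ≤ ‖⟪w, NormedSpace.normalize y⟫_ℂ‖ ^ 2 ↔
        a / ‖w‖ ^ 2 ≤ ‖(ℂ ∙ w).starProjection y‖ ^ 2 / ‖y‖ ^ 2 := by
      rw [norm_inner_normalize_sq, div_le_iff₀' hw_sq]
    simp_rw [h_scale]
    exact stdGaussian_norm_sq_starProjection_div_norm_sq_ge (finrank_span_singleton hw)
      (by positivity) (div_le_one_of_le₀ haw hw_sq.le)
  · have h_empty : {y | a ≤ ‖⟪w, NormedSpace.normalize y⟫_ℂ‖ ^ 2} = ∅ := by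
      refine Set.eq_empty_of_forall_notMem fun y hy ↦ haw (hy.trans ?_)
      rw [norm_inner_normalize_sq]
      refine mul_le_of_le_one_right hw_sq.le (div_le_one_of_le₀ ?_ (by positivity))
      gcongr
      exact (ℂ ∙ w).norm_starProjection_apply_le y
    rw [h_empty, measure_empty]

lemma map_linearIsometryEquiv_stdGaussian (T : E ≃ₗᵢ[ℂ] E) :
    (stdGaussian E).map T = stdGaussian E :=
  stdGaussian_map
    { T.toLinearEquiv.restrictScalars ℝ with norm_map' := T.norm_map }

end ComplexGaussian

/-! ### Gaussian orthonormal pairs -/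

section GaussianFrame

variable {E : Type*} [NormedAddCommGroup E] [InnerProductSpace ℂ E]

/-- The Gram–Schmidt process with normalization, for two vectors. -/
def orthonormalizePair (p : E × E) : E × E :=
  (NormedSpace.normalize p.1, NormedSpace.normalize ((ℂ ∙ p.1)ᗮ.starProjection p.2))

lemma starProjection_orthogonal_span_singleton (g h : E) :
    (ℂ ∙ g)ᗮ.starProjection h = h - (⟪g, h⟫_ℂ / ((‖g‖ : ℂ) ^ 2)) • g := by
  rw [Submodule.starProjection_orthogonal_val, Submodule.starProjection_singleton]
  norm_cast

lemma normalize_map (T : E ≃ₗᵢ[ℂ] E) (x : E) :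
    NormedSpace.normalize (T x) = T (NormedSpace.normalize x) := by
  rw [NormedSpace.normalize, NormedSpace.normalize, T.norm_map, map_real_smul T T.continuous]

lemma orthonormalizePair_map (T : E ≃ₗᵢ[ℂ] E) (p : E × E) :
    orthonormalizePair (Prod.map T T p) = Prod.map T T (orthonormalizePair p) := by
  simp only [orthonormalizePair, Prod.map, starProjection_orthogonal_span_singleton, T.norm_map,
    T.inner_map_map, ← map_smul, ← map_sub, normalize_map]

lemma orthonormal_pair_iff {u v : E} :
    Orthonormal ℂ ![u, v] ↔ ‖u‖ = 1 ∧ ‖v‖ = 1 ∧ ⟪u, v⟫_ℂ = 0 := by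
  simp [Orthonormal, Fin.forall_fin_two, Pairwise, inner_eq_zero_symm (y := u), and_assoc]

lemma orthonormal_orthonormalizePair {p : E × E} (h₁ : p.1 ≠ 0)
    (h₂ : (ℂ ∙ p.1)ᗮ.starProjection p.2 ≠ 0) :
    Orthonormal ℂ ![(orthonormalizePair p).1, (orthonormalizePair p).2] := by
  have h_inner : ⟪p.1, (ℂ ∙ p.1)ᗮ.starProjection p.2⟫_ℂ = 0 :=
    Submodule.mem_orthogonal_singleton_iff_inner_right.1 (Submodule.starProjection_apply_mem _ _)
  refine orthonormal_pair_iff.2 ⟨NormedSpace.norm_normalize h₁, NormedSpace.norm_normalize h₂, ?_⟩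
  rw [orthonormalizePair, NormedSpace.normalize, NormedSpace.normalize,
    inner_smul_left_eq_smul, inner_smul_right_eq_smul, h_inner, smul_zero, smul_zero]

variable [FiniteDimensional ℂ E]

lemma finrank_orthogonal_span_singleton {g : E} (hg : g ≠ 0) :
    finrank ℂ (ℂ ∙ g)ᗮ = finrank ℂ E - 1 := by
  have := (ℂ ∙ g).finrank_add_finrank_orthogonal
  rw [finrank_span_singleton hg] at this
  omega

variable [MeasurableSpace E] [BorelSpace E]

@[fun_prop]
lemma measurable_orthonormalizePair : Measurable (orthonormalizePair : E × E → E × E) := by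
  unfold orthonormalizePair NormedSpace.normalize
  simp only [starProjection_orthogonal_span_singleton]
  fun_prop

attribute [local instance] InnerProductSpace.complexToReal

variable (E) in
/-- The law of a uniformly random orthonormal pair of vectors of `E` (for `2 ≤ dim E`), realized
by orthonormalizing two independent standard Gaussian vectors. -/
def gaussianFrame : Measure (E × E) :=
  ((stdGaussian E).prod (stdGaussian E)).map orthonormalizePair

instance : IsProbabilityMeasure (gaussianFrame E) :=
  Measure.isProbabilityMeasure_map (by fun_prop)

lemma map_linearIsometryEquiv_gaussianFrame (T : E ≃ₗᵢ[ℂ] E) :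
    (gaussianFrame E).map (Prod.map T T) = gaussianFrame E := by
  have h_comm : Prod.map T T ∘ orthonormalizePair = orthonormalizePair ∘ Prod.map T T :=
    funext fun p ↦ (orthonormalizePair_map T p).symm
  rw [gaussianFrame, Measure.map_map (by fun_prop) (by fun_prop), h_comm,
    ← Measure.map_map (by fun_prop) (by fun_prop), ← Measure.map_prod_map _ _ (by fun_prop)
    (by fun_prop), map_linearIsometryEquiv_stdGaussian]

lemma ae_gaussianFrame_orthonormal (hE : 2 ≤ finrank ℂ E) :
    ∀ᵐ p ∂gaussianFrame E, Orthonormal ℂ ![p.1, p.2] := by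
  have : Nontrivial E := nontrivial_of_finrank_pos (R := ℂ) (by omega)
  have h_closed : IsClosed {p : E × E | Orthonormal ℂ ![p.1, p.2]} := by
    simp only [orthonormal_pair_iff]
    exact (isClosed_eq (by fun_prop) continuous_const).inter
      ((isClosed_eq (by fun_prop) continuous_const).inter
        (isClosed_eq (by fun_prop) continuous_const))
  rw [gaussianFrame, ae_map_iff (by fun_prop) h_closed.measurableSet]
  refine (Measure.ae_prod_iff_ae_ae
    (p := fun p ↦ Orthonormal ℂ ![(orthonormalizePair p).1, (orthonormalizePair p).2])
    (measurable_orthonormalizePair h_closed.measurableSet)).2 ?_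
  filter_upwards [ae_stdGaussian_ne_zero] with g hg
  have : Nontrivial (ℂ ∙ g)ᗮ := nontrivial_of_finrank_pos (R := ℂ) <| by
    rw [finrank_orthogonal_span_singleton hg]
    omega
  have h_proj := ae_stdGaussian_ne_zero (E := (ℂ ∙ g)ᗮ)
  rw [← map_orthogonalProjectionOnto_orthogonal_stdGaussian] at h_proj
  filter_upwards [ae_of_ae_map (by fun_prop) h_proj] with h hh
  exact orthonormal_orthonormalizePair hg fun h_zero ↦ hh (Subtype.ext h_zero)

end GaussianFrame

section Overlap

variable {E : Type*} [NormedAddCommGroup E] [InnerProductSpace ℂ E] [FiniteDimensional ℂ E]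

lemma norm_inner_starProjection_self (K : Submodule ℂ E) (x : E) :
    ‖⟪x, K.starProjection x⟫_ℂ‖ = ‖K.starProjection x‖ ^ 2 := by
  rw [K.starProjection_apply, ← K.inner_orthogonalProjectionOnto_eq_of_mem_right,
    inner_self_eq_norm_sq_to_K]
  simp

lemma norm_sq_starProjection_orthogonal_starProjection_normalize (K : Submodule ℂ E) {g : E}
    (hg : g ≠ 0) :
    ‖(ℂ ∙ g)ᗮ.starProjection (K.starProjection (NormedSpace.normalize g))‖ ^ 2 =
      ‖K.starProjection g‖ ^ 2 / ‖g‖ ^ 2 * (1 - ‖K.starProjection g‖ ^ 2 / ‖g‖ ^ 2) := by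
  have h_norm : ‖g‖ ≠ 0 := norm_ne_zero_iff.2 hg
  have h_along : ‖(ℂ ∙ g).starProjection (K.starProjection g)‖ ^ 2 =
      (‖K.starProjection g‖ ^ 2) ^ 2 / ‖g‖ ^ 2 := by
    rw [Submodule.starProjection_singleton, norm_smul, norm_div, norm_inner_starProjection_self]
    simp [field]
  have h_pythagoras :=
    (ℂ ∙ g).norm_sq_eq_add_norm_sq_starProjection (K.starProjection g)
  rw [h_along, ← sub_eq_iff_eq_add'] at h_pythagoras
  rw [NormedSpace.normalize, map_real_smul _ (by fun_prop), map_real_smul _ (by fun_prop),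
    norm_smul, mul_pow, ← h_pythagoras, norm_inv, norm_norm]
  field

lemma inner_orthonormalizePair_starProjection (K : Submodule ℂ E) (g h : E) :
    ⟪(orthonormalizePair (g, h)).1, K.starProjection (orthonormalizePair (g, h)).2⟫_ℂ =
      ⟪(ℂ ∙ g)ᗮ.orthogonalProjectionOnto (K.starProjection (NormedSpace.normalize g)),
        NormedSpace.normalize ((ℂ ∙ g)ᗮ.orthogonalProjectionOnto h)⟫_ℂ := by
  rw [← K.inner_starProjection_left_eq_right,
    Submodule.inner_orthogonalProjectionOnto_eq_of_mem_right]
  rfl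

variable [MeasurableSpace E] [BorelSpace E]

attribute [local instance] InnerProductSpace.complexToReal

lemma stdGaussian_overlap_orthonormalizePair_ge (K : Submodule ℂ E) {a : ℝ} (ha : 0 ≤ a) {g : E}
    {t : ℝ} (ht : t ∈ Set.Ioo 0 1) (hgt : ‖K.starProjection g‖ ^ 2 / ‖g‖ ^ 2 = t) :
    stdGaussian E {h | a ≤ ‖⟪(orthonormalizePair (g, h)).1,
        K.starProjection (orthonormalizePair (g, h)).2⟫_ℂ‖ ^ 2} =
      if a ≤ t * (1 - t) then
        ENNReal.ofReal ((1 - a / (t * (1 - t))) ^ (finrank ℂ E - 2)) else 0 := by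
  have hg : g ≠ 0 := by
    rintro rfl
    simp [← hgt] at ht
  set w := (ℂ ∙ g)ᗮ.orthogonalProjectionOnto (K.starProjection (NormedSpace.normalize g)) with hw
  have h_norm : ‖w‖ ^ 2 = t * (1 - t) :=
    hgt ▸ norm_sq_starProjection_orthogonal_starProjection_normalize K hg
  have h_ne : w ≠ 0 := by
    rintro h_zero
    have := mul_pos ht.1 (sub_pos.2 ht.2)
    simp [h_zero, ← h_norm] at this
  have h_meas : MeasurableSet {y : (ℂ ∙ g)ᗮ | a ≤ ‖⟪w, NormedSpace.normalize y⟫_ℂ‖ ^ 2} := by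
    simp only [NormedSpace.normalize]
    exact measurableSet_le (by fun_prop) (by fun_prop)
  simp_rw [inner_orthonormalizePair_starProjection, ← hw]
  rw [← h_norm, show finrank ℂ E - 2 = finrank ℂ (ℂ ∙ g)ᗮ - 1 by
      rw [finrank_orthogonal_span_singleton hg]; omega,
    ← stdGaussian_norm_inner_normalize_sq_ge h_ne ha,
    ← map_orthogonalProjectionOnto_orthogonal_stdGaussian,
    Measure.map_apply (by fun_prop) h_meas]
  rfl

lemma gaussianFrame_overlap_ge (K : Submodule ℂ E) [Nontrivial K] [Nontrivial Kᗮ] {a : ℝ}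
    (ha : 0 ≤ a) :
    gaussianFrame E {p | a ≤ ‖⟪p.1, K.starProjection p.2⟫_ℂ‖ ^ 2} =
      ∫⁻ t in {t | a ≤ t * (1 - t)}, ENNReal.ofReal ((1 - a / (t * (1 - t))) ^ (finrank ℂ E - 2))
        ∂betaMeasure (finrank ℂ K) (finrank ℂ Kᗮ) := by
  have h_meas : MeasurableSet {p : E × E | a ≤ ‖⟪p.1, K.starProjection p.2⟫_ℂ‖ ^ 2} :=
    measurableSet_le (by fun_prop) (by fun_prop)
  have h_share := map_norm_sq_starProjection_div_norm_sq_stdGaussian K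
  have h_mem := ae_of_ae_map (by fun_prop) (h_share ▸ ae_betaMeasure_mem_Ioo _ _)
  rw [gaussianFrame, Measure.map_apply (by fun_prop) h_meas,
    Measure.prod_apply (measurable_orthonormalizePair h_meas), ← lintegral_indicator
      (measurableSet_le (by fun_prop) (by fun_prop)), ← h_share,
    lintegral_map (Measurable.indicator (by fun_prop)
      (measurableSet_le (by fun_prop) (by fun_prop))) (by fun_prop)]
  refine lintegral_congr_ae ?_
  filter_upwards [h_mem] with g hg
  rw [Set.indicator_apply]
  exact stdGaussian_overlap_orthonormalizePair_ge K ha hg rfl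

end Overlap

/-! ### The action of the unitary group -/

section Averaging

variable {G X : Type*} [Group G] [MeasurableSpace G] [MeasurableMul G] [MeasurableInv G]
  [MulAction G X] [MeasurableSpace X] [MeasurableSMul₂ G X]

/- Average `g⁻¹ • y` over both `g` and `y`: for fixed `g` it has law `ν`, while for fixed
`y = k • x` the substitution `g ↦ k * g` shows that it has the law of `g⁻¹ • x`. -/
lemma map_inv_smul_eq_of_ae_mem_orbit {μ : Measure G} [IsProbabilityMeasure μ]
    [μ.IsMulLeftInvariant] {ν : Measure X} [IsProbabilityMeasure ν] [SMulInvariantMeasure G X ν]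
    {x : X} (h_orbit : ∀ᵐ y ∂ν, y ∈ MulAction.orbit G x) :
    μ.map (fun g ↦ g⁻¹ • x) = ν := by
  ext s hs
  have h_ind : Measurable (s.indicator (1 : X → ℝ≥0∞)) := measurable_one.indicator hs
  have h_fixed {y : X} (hy : y ∈ MulAction.orbit G x) :
      ∫⁻ g, s.indicator 1 (g⁻¹ • y) ∂μ = μ.map (fun g ↦ g⁻¹ • x) s := by
    obtain ⟨k, rfl⟩ := hy
    rw [← lintegral_mul_left_eq_self _ k, ← lintegral_indicator_one hs,
      lintegral_map h_ind (by fun_prop)]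
    simp [← mul_smul]
  calc μ.map (fun g ↦ g⁻¹ • x) s
      = ∫⁻ y, ∫⁻ g, s.indicator 1 (g⁻¹ • y) ∂μ ∂ν := by
        rw [lintegral_congr_ae (h_orbit.mono fun y hy ↦ h_fixed hy), lintegral_const,
          measure_univ, mul_one]
    _ = ∫⁻ g, ∫⁻ y, s.indicator 1 (g⁻¹ • y) ∂ν ∂μ :=
        lintegral_lintegral_swap (by unfold Function.uncurry; fun_prop)
    _ = ν s := by
        simp_rw [(measurePreserving_smul _ ν).lintegral_comp h_ind, lintegral_indicator_one hs]
        simp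

end Averaging

lemma exists_linearIsometryEquiv_of_orthonormal {𝕜 E ι : Type*} [RCLike 𝕜]
    [NormedAddCommGroup E] [InnerProductSpace 𝕜 E] [FiniteDimensional 𝕜 E] {u v : ι → E}
    (hu : Orthonormal 𝕜 u) (hv : Orthonormal 𝕜 v) : ∃ T : E ≃ₗᵢ[𝕜] E, ∀ i, T (u i) = v i := by
  let b := Basis.span hu.linearIndependent
  have h_basis (i : ι) : b i = ⟨u i, Submodule.subset_span (Set.mem_range_self i)⟩ :=
    Basis.span_apply _ i
  have h_orth : Orthonormal 𝕜 b := by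
    simpa only [← h_basis] using orthonormal_span hu
  let L := (b.constr 𝕜 v).isometryOfOrthonormal h_orth (by simpa [Function.comp_def] using hv)
  refine ⟨L.extend.toLinearIsometryEquiv rfl, fun i ↦ ?_⟩
  have h_extend := L.extend_apply (b i)
  rw [h_basis] at h_extend
  exact h_extend.trans (h_basis i ▸ b.constr_basis 𝕜 v i)

section UnitaryGroup

variable {D : ℕ}

variable (D) in
/-- Unitary matrices as linear isometries of `ℂ^D`. -/
def unitaryGroupEquiv :
    UG D ≃* (EuclideanSpace ℂ (Fin D) ≃ₗᵢ[ℂ] EuclideanSpace ℂ (Fin D)) :=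
  let toCLM := Matrix.toEuclideanCLM (n := Fin D) (𝕜 := ℂ)
  (Unitary.mapEquiv ⟨toCLM.toMulEquiv, map_star toCLM⟩).toMulEquiv.trans
    Unitary.linearIsometryEquiv

instance : MulAction (UG D) (EuclideanSpace ℂ (Fin D)) where
  smul U x := unitaryGroupEquiv D U x
  one_smul x := DFunLike.congr_fun (map_one (unitaryGroupEquiv D)) x
  mul_smul U V x := DFunLike.congr_fun (map_mul (unitaryGroupEquiv D) U V) x

lemma unitaryGroup_smul_eq (U : UG D) (x : EuclideanSpace ℂ (Fin D)) :
    U • x = WithLp.toLp 2 ((U : Matrix (Fin D) (Fin D) ℂ).mulVec x.ofLp) :=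
  rfl

instance : ContinuousSMul (UG D) (EuclideanSpace ℂ (Fin D)) where
  continuous_smul := by
    simp only [unitaryGroup_smul_eq]
    fun_prop

instance : SMulInvariantMeasure (UG D) (EuclideanSpace ℂ (Fin D) × EuclideanSpace ℂ (Fin D))
    (gaussianFrame (EuclideanSpace ℂ (Fin D))) where
  measure_preimage_smul U s hs := by
    conv_rhs => rw [← map_linearIsometryEquiv_gaussianFrame (unitaryGroupEquiv D U)]
    exact (Measure.map_apply (by fun_prop) hs).symm

lemma mem_orbit_unitaryGroup_of_orthonormal
    {p q : EuclideanSpace ℂ (Fin D) × EuclideanSpace ℂ (Fin D)}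
    (hp : Orthonormal ℂ ![p.1, p.2]) (hq : Orthonormal ℂ ![q.1, q.2]) :
    q ∈ MulAction.orbit (UG D) p := by
  obtain ⟨T, hT⟩ := exists_linearIsometryEquiv_of_orthonormal hp hq
  obtain ⟨U, rfl⟩ := (unitaryGroupEquiv D).surjective T
  exact ⟨U, Prod.ext (hT 0) (hT 1)⟩

lemma map_unitaryGroup_inv_smul_eq_gaussianFrame (μ : Measure (UG D)) [μ.IsMulLeftInvariant]
    [IsProbabilityMeasure μ] {p : EuclideanSpace ℂ (Fin D) × EuclideanSpace ℂ (Fin D)}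
    (hp : Orthonormal ℂ ![p.1, p.2]) :
    μ.map (fun U ↦ U⁻¹ • p) = gaussianFrame (EuclideanSpace ℂ (Fin D)) := by
  refine map_inv_smul_eq_of_ae_mem_orbit ?_
  filter_upwards [ae_gaussianFrame_orthonormal (by
    simpa using hp.linearIndependent.fintype_card_le_finrank)] with q hq
  exact mem_orbit_unitaryGroup_of_orthonormal hp hq

lemma dotc_eq_inner (v w : Fin D → ℂ) : dotc v w = ⟪WithLp.toLp 2 v, WithLp.toLp 2 w⟫_ℂ := by
  simp [dotc, PiLp.inner_apply, mul_comm]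

lemma orthonormal_toLp_pair {φ ψ : Fin D → ℂ} (hφ : nsq φ = 1) (hψ : nsq ψ = 1)
    (hφψ : dotc φ ψ = 0) :
    Orthonormal ℂ ![WithLp.toLp 2 φ, WithLp.toLp 2 ψ] := by
  rw [orthonormal_pair_iff, ← dotc_eq_inner, EuclideanSpace.norm_eq, EuclideanSpace.norm_eq]
  exact ⟨by rwa [← nsq, Real.sqrt_eq_one], by rwa [← nsq, Real.sqrt_eq_one], hφψ⟩

lemma dotc_rotProj_mulVec (U : UG D) (P : Matrix (Fin D) (Fin D) ℂ) (φ ψ : Fin D → ℂ) :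
    dotc φ ((rotProj U P).mulVec ψ) =
      ⟪U⁻¹ • WithLp.toLp 2 φ, Matrix.toEuclideanCLM (𝕜 := ℂ) P (U⁻¹ • WithLp.toLp 2 ψ)⟫_ℂ := by
  have h_adjoint (x y : EuclideanSpace ℂ (Fin D)) : ⟪x, U • y⟫_ℂ = ⟪U⁻¹ • x, y⟫_ℂ := by
    rw [← (unitaryGroupEquiv D U).inner_map_map (U⁻¹ • x) y]
    exact congrArg (⟪·, U • y⟫_ℂ) (smul_inv_smul U x).symm
  rw [← h_adjoint, dotc_eq_inner, rotProj, ← Matrix.mulVec_mulVec, ← Matrix.mulVec_mulVec]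
  rfl

end UnitaryGroup

lemma toEuclideanCLM_eq_starProjection {D : ℕ} {P : Matrix (Fin D) (Fin D) ℂ} (hP : P * P = P)
    (hP_herm : P.IsHermitian) :
    Matrix.toEuclideanCLM (𝕜 := ℂ) P =
      (Matrix.toEuclideanLin (𝕜 := ℂ) P).range.starProjection := by
  have h_proj : IsStarProjection (Matrix.toEuclideanCLM (𝕜 := ℂ) P) :=
    (IsStarProjection.mk hP hP_herm).map _
  exact (isStarProjection_iff_eq_starProjection_range.1 h_proj).2

lemma finrank_range_toEuclideanLin {D : ℕ} (P : Matrix (Fin D) (Fin D) ℂ) :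
    finrank ℂ (Matrix.toEuclideanLin (𝕜 := ℂ) P).range = P.rank := by
  rw [Matrix.rank_eq_finrank_range_toLin P (EuclideanSpace.basisFun (Fin D) ℂ).toBasis
    (EuclideanSpace.basisFun (Fin D) ℂ).toBasis, Matrix.toEuclideanLin_eq_toLin_orthonormal]

/-! ### The integral formula -/

section OverlapIntegral

lemma setOf_le_mul_one_sub {a : ℝ} (ha : a ≤ 1 / 4) :
    {t : ℝ | a ≤ t * (1 - t)} = Set.Icc (1 / 2 - √(1 / 4 - a)) (1 / 2 + √(1 / 4 - a)) := by
  ext t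
  have h_square : a ≤ t * (1 - t) ↔ (t - 1 / 2) ^ 2 ≤ 1 / 4 - a := by
    constructor <;> intro h <;> linarith
  rw [Set.mem_ofPred_eq, h_square, Real.sq_le (by linarith), Set.mem_Icc]
  constructor <;> rintro ⟨h₁, h₂⟩ <;> constructor <;> linarith

lemma betaPDF_natCast_add_one (p q : ℕ) {t : ℝ} (ht : t ∈ Set.Ioo 0 1) :
    betaPDF (p + 1) (q + 1) t = ENNReal.ofReal
      (Nat.factorial (p + q + 1) / (Nat.factorial p * Nat.factorial q) *
        (t ^ p * (1 - t) ^ q)) := by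
  have h_gamma : Real.Gamma (p + 1 + (q + 1)) = Nat.factorial (p + q + 1) := by
    rw [← Real.Gamma_nat_eq_factorial]
    push_cast
    ring_nf
  rw [betaPDF_of_pos_lt_one ht.1 ht.2, beta, h_gamma, Real.Gamma_nat_eq_factorial,
    Real.Gamma_nat_eq_factorial, add_sub_cancel_right, add_sub_cancel_right, Real.rpow_natCast,
    Real.rpow_natCast, one_div_div, mul_assoc]

lemma betaPDF_mul_overlap_tail (p q : ℕ) (a : ℝ) {t : ℝ} (ht : t ∈ Set.Ioo 0 1) :
    betaPDF (p + 1) (q + 1) t * ENNReal.ofReal ((1 - a / (t * (1 - t))) ^ (p + q)) =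
      ENNReal.ofReal (Nat.factorial (p + q + 1) / (Nat.factorial p * Nat.factorial q) *
        ((t * (1 - t) - a) ^ (p + q) / (t ^ q * (1 - t) ^ p))) := by
  have h_pos : 0 < t := ht.1
  have h_pos' : 0 < 1 - t := sub_pos.2 ht.2
  rw [betaPDF_natCast_add_one p q ht, ← ENNReal.ofReal_mul (by positivity),
    one_sub_div (by positivity), div_pow, mul_pow, pow_add, pow_add]
  congr 1
  field

lemma toReal_setLIntegral_overlap_tail_betaMeasure (p q : ℕ) {a : ℝ} (ha₀ : 0 ≤ a)
    (ha₁ : a ≤ 1 / 4) :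
    (∫⁻ t in {t | a ≤ t * (1 - t)}, ENNReal.ofReal ((1 - a / (t * (1 - t))) ^ (p + q))
        ∂betaMeasure (p + 1) (q + 1)).toReal =
      Nat.factorial (p + q + 1) / (Nat.factorial p * Nat.factorial q) *
        ∫ x in (1 / 2 - √(1 / 4 - a))..(1 / 2 + √(1 / 4 - a)),
          (x * (1 - x) - a) ^ (p + q) / (x ^ q * (1 - x) ^ p) := by
  have h_sqrt : √(1 / 4 - a) ≤ 1 / 2 := Real.sqrt_le_iff.2 ⟨by norm_num, by linarith⟩
  have h_le : 1 / 2 - √(1 / 4 - a) ≤ 1 / 2 + √(1 / 4 - a) := by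
    linarith [Real.sqrt_nonneg (1 / 4 - a)]
  have h_Ioo : Set.Ioo (1 / 2 - √(1 / 4 - a)) (1 / 2 + √(1 / 4 - a)) ⊆ Set.Ioo 0 1 :=
    Set.Ioo_subset_Ioo (by linarith) (by linarith)
  rw [setOf_le_mul_one_sub ha₁, betaMeasure, restrict_withDensity measurableSet_Icc,
    lintegral_withDensity_eq_lintegral_mul _ (measurable_betaPDF _ _) (by fun_prop),
    ← setLIntegral_congr Ioo_ae_eq_Icc, ← intervalIntegral.integral_const_mul,
    intervalIntegral.integral_of_le h_le, integral_Ioc_eq_integral_Ioo,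
    integral_eq_lintegral_of_nonneg_ae _
      (Measurable.aestronglyMeasurable (by fun_prop))]
  · congr 1
    exact setLIntegral_congr_fun measurableSet_Ioo
      fun t ht ↦ betaPDF_mul_overlap_tail p q a (h_Ioo ht)
  · filter_upwards [ae_restrict_mem measurableSet_Ioo] with t ht
    have h_pos : 0 < t := (h_Ioo ht).1
    have h_pos' : 0 < 1 - t := sub_pos.2 (h_Ioo ht).2
    have h_nonneg : 0 ≤ t * (1 - t) - a :=
      sub_nonneg.2 ((setOf_le_mul_one_sub ha₁).ge (Set.Ioo_subset_Icc_self ht))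
    rw [Pi.zero_apply]
    positivity

end OverlapIntegral

lemma measure_overlap_rotProj_eq_gaussianFrame {D : ℕ} {P : Matrix (Fin D) (Fin D) ℂ}
    (hP : P * P = P) (hP_herm : P.IsHermitian) {φ ψ : Fin D → ℂ} (hφ : nsq φ = 1)
    (hψ : nsq ψ = 1) (hφψ : dotc φ ψ = 0) (a : ℝ) (μ : Measure (UG D)) [μ.IsMulLeftInvariant]
    [IsProbabilityMeasure μ] :
    μ {U : UG D | a ≤ ‖dotc φ ((rotProj U P).mulVec ψ)‖ ^ 2} =
      gaussianFrame (EuclideanSpace ℂ (Fin D))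
        {p | a ≤ ‖⟪p.1, (Matrix.toEuclideanLin (𝕜 := ℂ) P).range.starProjection p.2⟫_ℂ‖ ^ 2} := by
  rw [← map_unitaryGroup_inv_smul_eq_gaussianFrame μ
      (p := (WithLp.toLp 2 φ, WithLp.toLp 2 ψ)) (orthonormal_toLp_pair hφ hψ hφψ),
    Measure.map_apply (by fun_prop) (measurableSet_le (by fun_prop) (by fun_prop)),
    ← toEuclideanCLM_eq_starProjection hP hP_herm]
  simp only [dotc_rotProj_mulVec]
  rfl

theorem stmt13_general (D d : ℕ) (hd0 : 0 < d) (hdD : d < D)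
    (P : Matrix (Fin D) (Fin D) ℂ) (hP1 : P * P = P) (hP2 : P.IsHermitian) (hPr : P.rank = d)
    (φ ψ : Fin D → ℂ) (hφ : nsq φ = 1) (hψ : nsq ψ = 1) (hφψ : dotc φ ψ = 0)
    (a : ℝ) (ha0 : 0 ≤ a) (ha1 : a ≤ 1 / 4)
    (μ : Measure (UG D)) [μ.IsMulLeftInvariant] [IsProbabilityMeasure μ] :
    (μ {U : UG D | a ≤ ‖dotc φ ((rotProj U P).mulVec ψ)‖ ^ 2}).toReal =
      (Nat.factorial (D - 1) : ℝ) / (Nat.factorial (d - 1) * Nat.factorial (D - d - 1)) *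
        ∫ x in (1 / 2 - Real.sqrt (1 / 4 - a))..(1 / 2 + Real.sqrt (1 / 4 - a)),
          (x * (1 - x) - a) ^ (D - 2) / (x ^ (D - d - 1) * (1 - x) ^ (d - 1)) := by
  obtain ⟨p, rfl⟩ : ∃ p, d = p + 1 := ⟨d - 1, by omega⟩
  obtain ⟨q, rfl⟩ : ∃ q, D = p + q + 2 := ⟨D - p - 2, by omega⟩
  let K := (Matrix.toEuclideanLin (𝕜 := ℂ) P).range
  have hK : finrank ℂ K = p + 1 := (finrank_range_toEuclideanLin P).trans hPr
  have hKo : finrank ℂ Kᗮ = q + 1 := by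
    have := K.finrank_add_finrank_orthogonal
    rw [finrank_euclideanSpace_fin] at this
    omega
  have : Nontrivial K := nontrivial_of_finrank_pos (R := ℂ) (by omega)
  have : Nontrivial Kᗮ := nontrivial_of_finrank_pos (R := ℂ) (by omega)
  rw [measure_overlap_rotProj_eq_gaussianFrame hP1 hP2 hφ hψ hφψ, gaussianFrame_overlap_ge K ha0,
    hK, hKo, finrank_euclideanSpace_fin, Nat.add_sub_cancel, Nat.cast_succ, Nat.cast_succ,
    toReal_setLIntegral_overlap_tail_betaMeasure p q ha0 ha1,
    show p + q + 2 - (p + 1) - 1 = q by omega]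
  rfl

theorem stmt13 (D d : ℕ) (hd1 : 1 < d) (hd2 : d + 1 < D)
    (P : Matrix (Fin D) (Fin D) ℂ) (hP1 : P * P = P) (hP2 : P.IsHermitian) (hPr : P.rank = d)
    (φ ψ : Fin D → ℂ) (hφ : nsq φ = 1) (hψ : nsq ψ = 1) (hφψ : dotc φ ψ = 0)
    (a : ℝ) (ha0 : 0 ≤ a) (ha1 : a ≤ 1 / 4)
    (μ : Measure (UG D)) [μ.IsHaarMeasure] [IsProbabilityMeasure μ] :
    (μ {U : UG D | a ≤ ‖dotc φ ((rotProj U P).mulVec ψ)‖ ^ 2}).toReal =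
      (Nat.factorial (D - 1) : ℝ) / (Nat.factorial (d - 1) * Nat.factorial (D - d - 1)) *
        ∫ x in (1 / 2 - Real.sqrt (1 / 4 - a))..(1 / 2 + Real.sqrt (1 / 4 - a)),
          (x * (1 - x) - a) ^ (D - 2) / (x ^ (D - d - 1) * (1 - x) ^ (d - 1)) :=
  stmt13_general D d (by omega) (by omega) P hP1 hP2 hPr φ ψ hφ hψ hφψ a ha0 ha1 μ
end
end

section
/- For integers 1 < d < D − 1 and a real a with 0 ≤ a ≤ d²/D² and d/D + √a ≤ 1, define I(d,D,a) = ((D−1)!/((d−1)!·(D−d−1)!)) · ∫_{[0, d/D − √a] ∪ [d/D + √a, 1]} u^{d−1}·(1−u)^{D−d−1} du, and let θ = 11/12. Then there exists a constant C > 4 such that: for all integers d ≥ 1, D and reals a ≥ 0 with C·log D < d < D/C and 1/D < √a < d/(8D), one has I(d,D,a) < (D/√d)·e^{−θ·a·D²/(2d)}. -/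
open MeasureTheory

noncomputable section

/-- The incomplete-Beta-type quantity I(d,D,a). -/
def Ifun (d D : ℕ) (a : ℝ) : ℝ :=
  (Nat.factorial (D - 1) : ℝ) / (Nat.factorial (d - 1) * Nat.factorial (D - d - 1)) *
    ∫ u in Set.Icc (0:ℝ) ((d : ℝ) / D - Real.sqrt a) ∪ Set.Icc ((d : ℝ) / D + Real.sqrt a) 1,
      u ^ (d - 1) * (1 - u) ^ (D - d - 1)

/-!
On each of the two tails the Beta density is at most its value at the inner endpoint `x`, since the
mode `(d - 1) / (D - 2)` is within `1 / D` of the mean `p = d / D`. That value times `x * (1 - x)`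
is a multiple of `x ^ d * (1 - x) ^ (D - d)`, which is maximal at `x = p`. Stirling's formula
bounds the maximum, and `log (1 + s) ≤ s - s ^ 2 / 2 + s ^ 3 / 3` at `s = (x - p) / p ≤ 1 / 8`
gives the Gaussian factor: the cubic term turns the coefficient `1 / 2` into `11 / 24 = θ / 2`.
Multiplying by the length of the tail cancels `x` or `1 - x`, and the remaining factors
`1 / (1 - x)` and `1 / x` are less than `1 / p` when `p ≤ 1 / 2`.
-/

/-- The density at `u` of the Beta distribution with positive integer parameters `d` and `e`, in
polynomial form; unlike `ProbabilityTheory.betaPDFReal` it is not cut off outside `(0, 1)`. It is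
the integrand of `Ifun d (d + e)`. The exponents are truncated subtractions, so `d` and `e` have to
be positive for this reading. -/
def betaDensity (d e : ℕ) (u : ℝ) : ℝ :=
  ((d + e - 1).factorial : ℝ) / ((d - 1).factorial * (e - 1).factorial) *
    (u ^ (d - 1) * (1 - u) ^ (e - 1))

theorem log_one_add_le_sub_add {x : ℝ} (hx : -1 < x) :
    Real.log (1 + x) ≤ x - x ^ 2 / 2 + x ^ 3 / 3 := by
  let f : ℝ → ℝ := fun y ↦ y - y ^ 2 / 2 + y ^ 3 / 3 - Real.log (1 + y)
  have hderiv (y : ℝ) (hy : -1 < y) : HasDerivAt f (y ^ 3 / (1 + y)) y := by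
    have hy' : 1 + y ≠ 0 := by linarith
    refine ((((hasDerivAt_id' y).sub ((hasDerivAt_pow 2 y).div_const 2)).add
      ((hasDerivAt_pow 3 y).div_const 3)).sub
        (((hasDerivAt_id' y).const_add 1).log hy')).congr_deriv ?_
    simp only [Nat.cast_ofNat]
    field_simp
    ring
  have hmin : IsMinOn f (Set.Ioi (-1)) 0 := by
    refine isMinOn_Ioi_of_deriv (hderiv 0 (by norm_num)).continuousAt
      (fun y hy ↦ (hderiv y hy.1).differentiableAt.differentiableWithinAt)
      (fun y hy ↦ (hderiv y ?_).differentiableAt.differentiableWithinAt)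
      (fun y hy ↦ ?_) (fun y hy ↦ ?_)
    · exact neg_one_lt_zero.trans hy
    · rw [(hderiv y hy.1).deriv]
      exact div_nonpos_of_nonpos_of_nonneg (Odd.pow_nonpos (by decide) hy.2.le) (by linarith [hy.1])
    · have hy : 0 < y := hy
      rw [(hderiv y (by linarith)).deriv]
      positivity
  have hf₀ : f 0 = 0 := by simp [f]
  have hfx : f 0 ≤ f x := hmin hx
  exact sub_nonneg.1 (hf₀ ▸ hfx)

theorem le_mul_exp_sub_div {p : ℝ} (hp : 0 < p) (x : ℝ) : x ≤ p * Real.exp ((x - p) / p) :=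
  calc x = p * ((x - p) / p + 1) := by field_simp; ring
    _ ≤ p * Real.exp ((x - p) / p) := by gcongr; exact Real.add_one_le_exp _

theorem le_mul_exp_sub_div_sub_sq {p x : ℝ} (hp : 0 < p) (hx : 0 ≤ x) (hxp : x ≤ 9 / 8 * p) :
    x ≤ p * Real.exp ((x - p) / p - 11 / 24 * ((x - p) / p) ^ 2) := by
  rcases hx.eq_or_lt with rfl | hx
  · positivity
  set s := (x - p) / p with hs
  have hx_eq : x = p * (1 + s) := by rw [hs]; field_simp; ring
  have hs_gt : -1 < s := by rw [hs, lt_div_iff₀ hp]; linarith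
  have hs_le : s ≤ 1 / 8 := by rw [hs, div_le_iff₀ hp]; linarith
  -- `s³ / 3 ≤ s² / 24` for `s ≤ 1 / 8`, and `1 / 2 - 1 / 24 = 11 / 24`.
  have hlog : Real.log (1 + s) ≤ s - 11 / 24 * s ^ 2 := by
    nlinarith [log_one_add_le_sub_add hs_gt, mul_le_mul_of_nonneg_left hs_le (sq_nonneg s)]
  calc x = p * (1 + s) := hx_eq
    _ ≤ p * Real.exp (s - 11 / 24 * s ^ 2) := by
      gcongr
      exact (Real.log_le_iff_le_exp (by linarith)).1 hlog

theorem factorial_le_exp_one_mul_sqrt_mul_pow {n : ℕ} (hn : 0 < n) :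
    (n.factorial : ℝ) ≤ Real.exp 1 * √n * (n / Real.exp 1) ^ n := by
  obtain ⟨k, rfl⟩ := Nat.exists_eq_add_one.2 hn
  have hanti : Stirling.stirlingSeq (k + 1) ≤ Real.exp 1 / √2 :=
    Stirling.stirlingSeq_one ▸ Stirling.stirlingSeq'_antitone k.zero_le
  rw [Stirling.stirlingSeq, div_le_iff₀ (by positivity), Real.sqrt_mul zero_le_two] at hanti
  refine hanti.trans_eq ?_
  field_simp

theorem setIntegral_Icc_le_mul {f : ℝ → ℝ} {a b c : ℝ} (hf : ContinuousOn f (Set.Icc a b))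
    (hab : a ≤ b) (h : ∀ u ∈ Set.Icc a b, f u ≤ c) :
    ∫ u in Set.Icc a b, f u ≤ c * (b - a) :=
  calc ∫ u in Set.Icc a b, f u ≤ ∫ _ in Set.Icc a b, c :=
        setIntegral_mono_on hf.integrableOn_Icc (by simp) measurableSet_Icc h
    _ = c * (b - a) := by
        rw [setIntegral_const, Real.volume_real_Icc_of_le hab, smul_eq_mul, mul_comm]

section Beta

variable {d e : ℕ} {u x : ℝ}

theorem choose_mul_pow_mul_pow_le (hd : 0 < d) (he : 0 < e) :
    ((d + e).choose d : ℝ) * ((d / (d + e) : ℝ) ^ d * (e / (d + e) : ℝ) ^ e) ≤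
      √((d + e) / (d * e)) / 2 := by
  have hd' : (0 : ℝ) < d := by exact_mod_cast hd
  set P : ℝ := (d / (d + e) : ℝ) ^ d * (e / (d + e) : ℝ) ^ e with hP
  set K : ℝ := ((d + e) / Real.exp 1) ^ (d + e) with hK
  have hfact : ((d + e).choose d : ℝ) * (d.factorial * e.factorial) = (d + e).factorial := by
    rw [Nat.cast_add_choose, div_mul_cancel₀ _ (by positivity)]
  have hfact_le : ((d + e).factorial : ℝ) ≤ Real.exp 1 * √(d + e) * K := by
    rw [hK]
    exact_mod_cast factorial_le_exp_one_mul_sqrt_mul_pow (Nat.add_pos_left hd e)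
  have hstirling :
      ((d + e).choose d : ℝ) * P * (2 * Real.pi * (√d * √e) * K) ≤ Real.exp 1 * √(d + e) * K :=
    calc ((d + e).choose d : ℝ) * P * (2 * Real.pi * (√d * √e) * K)
        = (d + e).choose d * ((√(2 * Real.pi * d) * (d / Real.exp 1) ^ d) *
            (√(2 * Real.pi * e) * (e / Real.exp 1) ^ e)) := by
          rw [Real.sqrt_mul (x := 2 * Real.pi) (by positivity),
            Real.sqrt_mul (x := 2 * Real.pi) (by positivity), hP, hK, pow_add]
          simp only [div_pow]
          field_simp
          rw [Real.sq_sqrt (by positivity), mul_assoc]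
      _ ≤ (d + e).choose d * (d.factorial * e.factorial) := by
          gcongr <;> exact Stirling.le_factorial_stirling _
      _ ≤ Real.exp 1 * √(d + e) * K := hfact.trans_le hfact_le
  -- This makes the Stirling constant `exp 1 / (2 * π)` at most `1 / 2`.
  have hexp : Real.exp 1 ≤ Real.pi := by linarith [Real.exp_one_lt_d9, Real.pi_gt_three]
  rw [Real.sqrt_div (by positivity), Real.sqrt_mul hd'.le, div_div, le_div_iff₀ (by positivity)]
  refine le_of_mul_le_mul_right ?_ (show 0 < Real.pi * K by positivity)
  calc ((d + e).choose d : ℝ) * P * (√d * √e * 2) * (Real.pi * K)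
      = (d + e).choose d * P * (2 * Real.pi * (√d * √e) * K) := by ring
    _ ≤ Real.exp 1 * √(d + e) * K := hstirling
    _ ≤ Real.pi * √(d + e) * K := by gcongr
    _ = √(d + e) * (Real.pi * K) := by ring

theorem pow_mul_one_sub_pow_le_of_mul_nonpos {m n : ℕ} (hx₀ : 0 < x) (hx₁ : x < 1)
    (hu₀ : 0 ≤ u) (hu₁ : u ≤ 1) (h : (u - x) * (m * (1 - x) - n * x) ≤ 0) :
    u ^ m * (1 - u) ^ n ≤ x ^ m * (1 - x) ^ n := by
  have hx₁' : 0 < 1 - x := sub_pos.2 hx₁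
  have : 0 ≤ 1 - u := sub_nonneg.2 hu₁
  have hexponent : m * ((u - x) / x) + n * ((1 - u - (1 - x)) / (1 - x)) ≤ 0 :=
    calc m * ((u - x) / x) + n * ((1 - u - (1 - x)) / (1 - x))
        = (u - x) * (m * (1 - x) - n * x) / (x * (1 - x)) := by field_simp; ring
      _ ≤ 0 := div_nonpos_of_nonpos_of_nonneg h (by positivity)
  calc u ^ m * (1 - u) ^ n
      ≤ (x * Real.exp ((u - x) / x)) ^ m *
          ((1 - x) * Real.exp ((1 - u - (1 - x)) / (1 - x))) ^ n := by
        gcongr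
        · exact le_mul_exp_sub_div hx₀ u
        · exact le_mul_exp_sub_div hx₁' (1 - u)
    _ = x ^ m * (1 - x) ^ n *
          Real.exp (m * ((u - x) / x) + n * ((1 - u - (1 - x)) / (1 - x))) := by
        rw [mul_pow, mul_pow, ← Real.exp_nat_mul, ← Real.exp_nat_mul, Real.exp_add]; ring
    _ ≤ x ^ m * (1 - x) ^ n :=
        mul_le_of_le_one_right (by positivity) (Real.exp_le_one_iff.2 hexponent)

theorem pow_mul_one_sub_pow_le_mul_exp (hd : 0 < d) (he : 0 < e) (hx₀ : 0 ≤ x) (hx₁ : x ≤ 1)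
    (hx : x ≤ 9 / 8 * (d / (d + e))) :
    x ^ d * (1 - x) ^ e ≤ (d / (d + e) : ℝ) ^ d * (e / (d + e) : ℝ) ^ e *
      Real.exp (-(11 / 24 * (d + e) ^ 2 * (x - d / (d + e)) ^ 2 / d)) := by
  set p : ℝ := d / (d + e) with hp
  set q : ℝ := e / (d + e) with hq
  have hp₀ : 0 < p := by positivity
  have hq₀ : 0 < q := by positivity
  have : 0 ≤ 1 - x := sub_nonneg.2 hx₁
  -- The linear terms cancel because `d / p = e / q = d + e` and `p + q = 1`.
  have hexponent : d * ((x - p) / p - 11 / 24 * ((x - p) / p) ^ 2) + e * ((1 - x - q) / q) =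
      -(11 / 24 * (d + e) ^ 2 * (x - p) ^ 2 / d) := by
    rw [hp, hq]; field_simp; ring
  calc x ^ d * (1 - x) ^ e
      ≤ (p * Real.exp ((x - p) / p - 11 / 24 * ((x - p) / p) ^ 2)) ^ d *
          (q * Real.exp ((1 - x - q) / q)) ^ e := by
        gcongr
        · exact le_mul_exp_sub_div_sub_sq hp₀ hx₀ hx
        · exact le_mul_exp_sub_div hq₀ (1 - x)
    _ = p ^ d * q ^ e * Real.exp (-(11 / 24 * (d + e) ^ 2 * (x - p) ^ 2 / d)) := by
        rw [mul_pow, mul_pow, ← Real.exp_nat_mul, ← Real.exp_nat_mul, ← hexponent, Real.exp_add]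
        ring

theorem continuous_betaDensity (d e : ℕ) : Continuous (betaDensity d e) := by
  unfold betaDensity
  fun_prop

theorem betaDensity_le_of_mul_nonpos (hd : 0 < d) (he : 0 < e) (hx₀ : 0 < x) (hx₁ : x < 1)
    (hu₀ : 0 ≤ u) (hu₁ : u ≤ 1) (h : (u - x) * (d - 1 - (d + e - 2) * x) ≤ 0) :
    betaDensity d e u ≤ betaDensity d e x := by
  refine mul_le_mul_of_nonneg_left
    (pow_mul_one_sub_pow_le_of_mul_nonpos hx₀ hx₁ hu₀ hu₁ (le_of_eq_of_le ?_ h)) (by positivity)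
  rw [Nat.cast_pred hd, Nat.cast_pred he]
  ring

theorem betaDensity_mul_self_mul_one_sub (hd : 0 < d) (he : 0 < e) (x : ℝ) :
    betaDensity d e x * (x * (1 - x)) =
      d * e / (d + e) * ((d + e).choose d * (x ^ d * (1 - x) ^ e)) := by
  obtain ⟨m, rfl⟩ := Nat.exists_eq_add_one.2 hd
  obtain ⟨n, rfl⟩ := Nat.exists_eq_add_one.2 he
  have hsum : m + 1 + (n + 1) = m + n + 1 + 1 := by ring
  rw [betaDensity, Nat.cast_add_choose, hsum]
  simp only [Nat.add_sub_cancel, Nat.factorial_succ]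
  push_cast
  field_simp
  ring

theorem betaDensity_mul_self_mul_one_sub_le (hd : 0 < d) (he : 0 < e) (hx₀ : 0 ≤ x) (hx₁ : x ≤ 1)
    (hx : x ≤ 9 / 8 * (d / (d + e))) :
    betaDensity d e x * (x * (1 - x)) ≤
      √d / 2 * Real.exp (-(11 / 24 * (d + e) ^ 2 * (x - d / (d + e)) ^ 2 / d)) := by
  set E := Real.exp (-(11 / 24 * (d + e) ^ 2 * (x - d / (d + e)) ^ 2 / d))
  have hsqrt : (d * e / (d + e) : ℝ) * √((d + e) / (d * e)) ≤ √d := by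
    refine Real.le_sqrt_of_sq_le ?_
    rw [mul_pow, Real.sq_sqrt (by positivity)]
    calc (d * e / (d + e) : ℝ) ^ 2 * ((d + e) / (d * e)) = d * (e / (d + e)) := by
          field_simp
      _ ≤ d := mul_le_of_le_one_right (by positivity) (div_le_one_of_le₀ (by simp) (by positivity))
  calc betaDensity d e x * (x * (1 - x))
      = d * e / (d + e) * ((d + e).choose d * (x ^ d * (1 - x) ^ e)) :=
        betaDensity_mul_self_mul_one_sub hd he x
    _ ≤ d * e / (d + e) *
          ((d + e).choose d * ((d / (d + e) : ℝ) ^ d * (e / (d + e) : ℝ) ^ e * E)) := by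
        gcongr ?_ * (?_ * ?_)
        exact pow_mul_one_sub_pow_le_mul_exp hd he hx₀ hx₁ hx
    _ = d * e / (d + e) *
          ((d + e).choose d * ((d / (d + e) : ℝ) ^ d * (e / (d + e) : ℝ) ^ e)) * E := by ring
    _ ≤ d * e / (d + e) * (√((d + e) / (d * e)) / 2) * E := by
        gcongr
        exact choose_mul_pow_mul_pow_le hd he
    _ = d * e / (d + e) * √((d + e) / (d * e)) / 2 * E := by ring
    _ ≤ √d / 2 * E := by gcongr

theorem setIntegral_betaDensity_lower_le (he : 0 < e) (hx₀ : 0 < x) (hx : (d + e) * x + 1 ≤ d) :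
    ∫ u in Set.Icc 0 x, betaDensity d e u ≤
      √d / 2 * Real.exp (-(11 / 24 * (d + e) ^ 2 * (x - d / (d + e)) ^ 2 / d)) / (1 - x) := by
  have hd' : (0 : ℝ) < d := by linarith [show 0 ≤ (d + e) * x by positivity]
  have hd : 0 < d := Nat.cast_pos.1 hd'
  have hx₁ : x < 1 := by nlinarith
  have hxp : x ≤ 9 / 8 * (d / (d + e)) := by
    rw [← mul_div_assoc, le_div_iff₀ (by positivity)]; linarith
  have hmax : ∀ u ∈ Set.Icc 0 x, betaDensity d e u ≤ betaDensity d e x := fun u hu ↦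
    betaDensity_le_of_mul_nonpos hd he hx₀ hx₁ hu.1 (hu.2.trans hx₁.le)
      (mul_nonpos_of_nonpos_of_nonneg (sub_nonpos.2 hu.2) (by linarith))
  rw [le_div_iff₀ (sub_pos.2 hx₁)]
  calc (∫ u in Set.Icc 0 x, betaDensity d e u) * (1 - x)
      ≤ betaDensity d e x * (x - 0) * (1 - x) := by
        have := sub_pos.2 hx₁
        gcongr
        exact setIntegral_Icc_le_mul (continuous_betaDensity d e).continuousOn hx₀.le hmax
    _ = betaDensity d e x * (x * (1 - x)) := by ring
    _ ≤ _ := betaDensity_mul_self_mul_one_sub_le hd he hx₀.le hx₁.le hxp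

theorem setIntegral_betaDensity_upper_le (hd : 0 < d) (he : 0 < e) (hx₁ : x < 1)
    (hx : d + 1 ≤ (d + e) * x) (hxp : x ≤ 9 / 8 * (d / (d + e))) :
    ∫ u in Set.Icc x 1, betaDensity d e u ≤
      √d / 2 * Real.exp (-(11 / 24 * (d + e) ^ 2 * (x - d / (d + e)) ^ 2 / d)) / x := by
  have hd' : (0 : ℝ) < d := by exact_mod_cast hd
  have he' : (0 : ℝ) < e := by exact_mod_cast he
  have hx₀ : 0 < x := by
    refine pos_of_mul_pos_right (a := (d + e : ℝ)) ?_ ?_ <;> linarith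
  have hmax : ∀ u ∈ Set.Icc x 1, betaDensity d e u ≤ betaDensity d e x := fun u hu ↦
    betaDensity_le_of_mul_nonpos hd he hx₀ hx₁ (hx₀.le.trans hu.1) hu.2
      (mul_nonpos_of_nonneg_of_nonpos (sub_nonneg.2 hu.1) (by linarith))
  rw [le_div_iff₀ hx₀]
  calc (∫ u in Set.Icc x 1, betaDensity d e u) * x
      ≤ betaDensity d e x * (1 - x) * x := by
        gcongr
        exact setIntegral_Icc_le_mul (continuous_betaDensity d e).continuousOn hx₁.le hmax
    _ = betaDensity d e x * (x * (1 - x)) := by ring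
    _ ≤ _ := betaDensity_mul_self_mul_one_sub_le hd he hx₀.le hx₁.le hxp

theorem setIntegral_betaDensity_tails_lt {t : ℝ} (hd : 0 < d) (hde : d ≤ e)
    (ht_lower : 1 ≤ (d + e) * t) (ht_upper : t ≤ d / (d + e) / 8) :
    (∫ u in Set.Icc 0 (d / (d + e) - t), betaDensity d e u) +
        ∫ u in Set.Icc (d / (d + e) + t) 1, betaDensity d e u <
      (d + e) / √d * Real.exp (-(11 / 24 * (d + e) ^ 2 * t ^ 2 / d)) := by
  have he : 0 < e := hd.trans_le hde
  have hde' : (d : ℝ) ≤ e := by exact_mod_cast hde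
  set p : ℝ := d / (d + e) with hp
  have : 0 < p := by positivity
  have hp_mul : (d + e) * p = d := by rw [hp]; field_simp
  have hp_half : p ≤ 1 / 2 := by rw [hp, div_le_iff₀ (by positivity)]; linarith
  have ht₀ : 0 < t := pos_of_mul_pos_right (ht_lower.trans_lt' one_pos) (by positivity)
  have hlower := setIntegral_betaDensity_lower_le (d := d) (x := p - t) he
    (by linarith) (by linarith)
  have hupper := setIntegral_betaDensity_upper_le (x := p + t) hd he
    (by linarith) (by linarith) (by linarith)
  rw [← hp, show p - t - p = -t by ring, neg_sq] at hlower
  rw [← hp, show p + t - p = t by ring] at hupper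
  set M := √d / 2 * Real.exp (-(11 / 24 * (d + e) ^ 2 * t ^ 2 / d)) with hM
  have : 0 < M := by positivity
  calc (∫ u in Set.Icc 0 (p - t), betaDensity d e u) + ∫ u in Set.Icc (p + t) 1, betaDensity d e u
      ≤ M / (1 - (p - t)) + M / (p + t) := add_le_add hlower hupper
    _ < M / p + M / p := by gcongr <;> linarith
    _ = (d + e) / √d * Real.exp (-(11 / 24 * (d + e) ^ 2 * t ^ 2 / d)) := by
      rw [hp, hM]
      field_simp
      rw [Real.sq_sqrt (by positivity)]
      ring

theorem Ifun_add_eq (d e : ℕ) {a : ℝ} (ha : 0 < √a) :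
    Ifun d (d + e) a = (∫ u in Set.Icc 0 (d / (d + e) - √a), betaDensity d e u) +
      ∫ u in Set.Icc (d / (d + e) + √a) 1, betaDensity d e u := by
  have hdisj : Disjoint (Set.Icc (0 : ℝ) (d / (d + e) - √a)) (Set.Icc (d / (d + e) + √a) 1) := by
    refine Set.disjoint_left.2 fun u hu hu' ↦ ?_
    linarith [hu.2, hu'.1]
  rw [← setIntegral_union hdisj measurableSet_Icc
    (continuous_betaDensity d e).continuousOn.integrableOn_Icc
    (continuous_betaDensity d e).continuousOn.integrableOn_Icc]
  simp only [Ifun, betaDensity, integral_const_mul, Nat.add_sub_cancel_left, Nat.cast_add]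

end Beta

theorem stmt14_general {d D : ℕ} {a : ℝ} (hd : 0 < d) (hdD : 2 * d ≤ D)
    (ha_lower : 1 / (D : ℝ) ≤ √a) (ha_upper : √a ≤ d / (8 * D)) :
    Ifun d D a < D / √d * Real.exp (-((11 / 12) * a * (D : ℝ) ^ 2 / (2 * d))) := by
  obtain ⟨e, rfl⟩ := Nat.exists_eq_add_of_le (show d ≤ D by lia)
  push_cast at ha_lower ha_upper ⊢
  have hsqrt : 0 < √a := ha_lower.trans_lt' (by positivity)
  have hsq : √a ^ 2 = a := Real.sq_sqrt (Real.sqrt_pos.1 hsqrt).le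
  have hexponent : 11 / 12 * a * (d + e) ^ 2 / (2 * d) = 11 / 24 * (d + e) ^ 2 * √a ^ 2 / d := by
    rw [hsq]; ring
  rw [hexponent, Ifun_add_eq d e hsqrt]
  refine setIntegral_betaDensity_tails_lt hd (by lia) ?_ ?_
  · rwa [div_le_iff₀' (by positivity)] at ha_lower
  · rwa [div_div, mul_comm _ (8 : ℝ)]

theorem stmt14 :
    ∃ C : ℝ, 4 < C ∧
      ∀ (d D : ℕ) (a : ℝ), 1 ≤ d → 0 ≤ a →
        C * Real.log D < d → (d : ℝ) < D / C →
        1 / (D : ℝ) < Real.sqrt a → Real.sqrt a < d / (8 * D) →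
        Ifun d D a <
          (D : ℝ) / Real.sqrt d * Real.exp (-((11 / 12) * a * (D : ℝ) ^ 2 / (2 * d))) := by
  refine ⟨5, by norm_num, fun d D a hd _ _ hdD ha_lower ha_upper ↦
    stmt14_general hd ?_ ha_lower.le ha_upper.le⟩
  exact_mod_cast (show (2 * d : ℝ) ≤ D by linarith)
end
end

section
/- There exists a constant C₀ > 4 with the following property. For all integers D, d with C₀·log D < d < D/C₀, for every orthonormal basis φ_1,…,φ_D of ℂ^D and every orthogonal projection P of rank d onto a coordinate subspace, ∫_{U(D)} max_{1 ≤ α ≤ D} ( ⟨φ_α, U P U⁻¹ φ_α⟩ − d/D )² dμ(U) < 9·d·(log D)/D², where μ is the Haar probability measure on U(D). -/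
open MeasureTheory Filter

noncomputable section

/-- The orthogonal projection onto the coordinate subspace spanned by the standard
basis vectors with indices in s. -/
def coordProj (D : ℕ) (s : Finset (Fin D)) : Matrix (Fin D) (Fin D) ℂ :=
  Matrix.diagonal (fun i => if i ∈ s then 1 else 0)

/-!
For positive `a` let `Q(z) = ∑ i, a i * ‖z i‖ ^ 2` on `ℂⁿ`. The Gaussian integral of `exp (-Q)` is
`π ^ n * ∏ i, (a i)⁻¹`; evaluating it in polar coordinates, with the direction `U⁻¹ φ` drawn from
Haar measure, shows that `Q(U⁻¹ φ) ^ (-n)` has mean `∏ i, (a i)⁻¹`. Taking `a = 1 - t * c` with `c`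
the centered indicator of the coordinate set and comparing `(1 - x) ^ (-n)` with `exp (n * x)`
gives a sub-Gaussian bound on the moment generating function of `⟨φ, U P U⁻¹ φ⟩ - d / D`. A union
bound over the `φ_α`, truncating at twice the logarithm of their number, controls the maximum.
-/

open ProbabilityTheory
open scoped Matrix

lemma inv_one_sub_le_exp {x : ℝ} (hx : |x| ≤ 1 / 2) :
    (1 - x)⁻¹ ≤ Real.exp (x + 2 * x ^ 2) := by
  have hpos : 0 < 1 - x := by linarith [le_abs_self x]
  have hlog : |x + Real.log (1 - x)| ≤ x ^ 2 / (1 - |x|) := by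
    simpa using Real.abs_log_sub_add_sum_range_le (hx.trans_lt (by norm_num)) 1
  have hquot : x ^ 2 / (1 - |x|) ≤ 2 * x ^ 2 := by
    rw [div_le_iff₀ (by linarith)]
    nlinarith [sq_nonneg x]
  rw [← Real.log_le_iff_le_exp (inv_pos.2 hpos), Real.log_inv]
  linarith [(abs_le.1 hlog).1]

lemma prod_inv_one_sub_le_exp {ι : Type*} {s : Finset ι} {c : ι → ℝ} (hsum : ∑ i ∈ s, c i = 0)
    (hc : ∀ i ∈ s, |c i| ≤ 1 / 2) :
    ∏ i ∈ s, (1 - c i)⁻¹ ≤ Real.exp (2 * ∑ i ∈ s, c i ^ 2) :=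
  calc ∏ i ∈ s, (1 - c i)⁻¹ ≤ ∏ i ∈ s, Real.exp (c i + 2 * c i ^ 2) :=
        Finset.prod_le_prod
          (fun i hi => inv_nonneg.2 <| by linarith [le_abs_self (c i), hc i hi])
          fun i hi => inv_one_sub_le_exp (hc i hi)
    _ = Real.exp (2 * ∑ i ∈ s, c i ^ 2) := by
        rw [← Real.exp_sum, Finset.sum_add_distrib, hsum, zero_add, Finset.mul_sum]

section UnitarySphere

variable {n : Type*} [Fintype n] [DecidableEq n]

lemma sum_norm_sq_mulVec (U : Matrix.unitaryGroup n ℂ) (z : n → ℂ) :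
    ∑ i, ‖(U.1 *ᵥ z) i‖ ^ 2 = ∑ i, ‖z i‖ ^ 2 := by
  have key (v : n → ℂ) : ((∑ i, ‖v i‖ ^ 2 : ℝ) : ℂ) = star v ⬝ᵥ v := by
    simp [dotProduct, Complex.conj_mul']
  have hU : U.1ᴴ * U.1 = 1 := Matrix.UnitaryGroup.star_mul_self U
  have h : star (U.1 *ᵥ z) ⬝ᵥ (U.1 *ᵥ z) = star z ⬝ᵥ z := by
    rw [Matrix.star_mulVec, Matrix.dotProduct_mulVec, Matrix.vecMul_vecMul, hU, Matrix.vecMul_one]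
  rw [← key, ← key] at h
  exact_mod_cast h

lemma exists_unitaryGroup_mulVec_single (i : n) (w : n → ℂ) :
    ∃ V : Matrix.unitaryGroup n ℂ,
      V.1 *ᵥ Pi.single i ((√(∑ j, ‖w j‖ ^ 2) : ℝ) : ℂ) = w := by
  set x : EuclideanSpace ℂ n := WithLp.toLp 2 w with hx
  have hnorm : √(∑ j, ‖w j‖ ^ 2) = ‖x‖ := (EuclideanSpace.norm_eq x).symm
  rw [hnorm]
  rcases eq_or_ne x 0 with h0 | h0
  · have hw : w = 0 := by simpa [hx] using h0
    exact ⟨1, by simp [h0, hw]⟩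
  · have hunit : Orthonormal ℂ (({i} : Set n).domRestrict fun _ => ((‖x‖ : ℂ)⁻¹ • x)) :=
      ⟨fun _ => by simp [norm_smul, h0], fun j k hjk => (hjk (Subsingleton.elim j k)).elim⟩
    obtain ⟨b, hb⟩ := hunit.exists_orthonormalBasis_extension_of_card_eq (by simp)
    refine ⟨⟨_, (EuclideanSpace.basisFun n ℂ).toMatrix_orthonormalBasis_mem_unitary b⟩, ?_⟩
    ext j
    have hx0 : (‖x‖ : ℂ) ≠ 0 := by simpa using h0
    rw [Matrix.mulVec_single]
    change b i j * (‖x‖ : ℂ) = w j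
    rw [hb i rfl, PiLp.smul_apply, smul_eq_mul, mul_right_comm, inv_mul_cancel₀ hx0, one_mul]

lemma exists_unitaryGroup_mulVec_eq {v w : n → ℂ} (h : ∑ i, ‖v i‖ ^ 2 = ∑ i, ‖w i‖ ^ 2) :
    ∃ V : Matrix.unitaryGroup n ℂ, V.1 *ᵥ v = w := by
  rcases isEmpty_or_nonempty n with _ | ⟨⟨i⟩⟩
  · exact ⟨1, Subsingleton.elim _ _⟩
  · obtain ⟨V, hV⟩ := exists_unitaryGroup_mulVec_single i v
    obtain ⟨W, hW⟩ := exists_unitaryGroup_mulVec_single i w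
    refine ⟨W * V⁻¹, ?_⟩
    rw [← hV, ← hW, ← h, Matrix.mulVec_mulVec, ← Submonoid.coe_mul, inv_mul_cancel_right]

lemma measurePreserving_mulVec (U : Matrix.unitaryGroup n ℂ) :
    MeasurePreserving (fun z : n → ℂ => U.1 *ᵥ z) := by
  let f : (n → ℂ) →ₗ[ℝ] (n → ℂ) := (Matrix.toLin' U.1).restrictScalars ℝ
  have hU : Complex.normSq U.1.det = 1 := by
    have h := (Matrix.det_of_mem_unitary U.2).2
    rw [Complex.star_def, Complex.mul_conj] at h
    exact_mod_cast h
  have hdet : LinearMap.det f = 1 := by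
    rw [LinearMap.det_restrictScalars, LinearMap.det_toLin', Algebra.norm_complex_apply, hU]
  have hmap := Measure.map_linearMap_addHaar_eq_smul_addHaar (volume : Measure (n → ℂ))
    (hdet ▸ one_ne_zero : LinearMap.det f ≠ 0)
  rw [hdet, inv_one, abs_one, ENNReal.ofReal_one, one_smul] at hmap
  exact ⟨f.continuous_of_finiteDimensional.measurable, hmap⟩

end UnitarySphere

section DiagForm

variable {n : Type*} [Fintype n]

/-- The diagonal Hermitian form `z ↦ ∑ i, a i * ‖z i‖ ^ 2` on `ℂⁿ`, whose values at a Haar random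
unit vector are the quantities to be concentrated. -/
def diagForm (a : n → ℝ) (z : n → ℂ) : ℝ := ∑ i, a i * ‖z i‖ ^ 2

@[fun_prop]
lemma continuous_diagForm (a : n → ℝ) : Continuous (diagForm a) := by
  unfold diagForm; fun_prop

lemma diagForm_const (b : ℝ) (z : n → ℂ) : diagForm (fun _ => b) z = b * ∑ i, ‖z i‖ ^ 2 := by
  simp only [diagForm, Finset.mul_sum]

lemma diagForm_smul (a : n → ℝ) (r : ℝ) (z : n → ℂ) :
    diagForm a ((r : ℂ) • z) = r ^ 2 * diagForm a z := by
  simp [diagForm, Finset.mul_sum, mul_pow, mul_left_comm]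

lemma diagForm_pos {a : n → ℝ} (ha : ∀ i, 0 < a i) {z : n → ℂ} (hz : ∑ i, ‖z i‖ ^ 2 = 1) :
    0 < diagForm a z := by
  obtain ⟨i, hi, hzi⟩ : ∃ i ∈ Finset.univ, ‖z i‖ ^ 2 ≠ 0 :=
    Finset.exists_ne_zero_of_sum_ne_zero (hz ▸ one_ne_zero)
  exact Finset.sum_pos' (fun j _ => mul_nonneg (ha j).le (sq_nonneg _))
    ⟨i, hi, mul_pos (ha i) (by positivity)⟩

lemma diagForm_one_sub_smul (t : ℝ) (c : n → ℝ) {z : n → ℂ} (hz : ∑ i, ‖z i‖ ^ 2 = 1) :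
    diagForm (fun i => 1 - t * c i) z = 1 - t * diagForm c z := by
  simp only [diagForm, sub_mul, one_mul, Finset.sum_sub_distrib, hz, Finset.mul_sum, mul_assoc]

lemma abs_diagForm_le (c : n → ℝ) {z : n → ℂ} (hz : ∑ i, ‖z i‖ ^ 2 = 1) :
    |diagForm c z| ≤ ∑ i, |c i| := by
  refine (Finset.abs_sum_le_sum_abs _ _).trans (Finset.sum_le_sum fun i hi => ?_)
  have hzi : ‖z i‖ ^ 2 ≤ 1 :=
    hz ▸ Finset.single_le_sum (f := fun i => ‖z i‖ ^ 2) (fun _ _ => sq_nonneg _) hi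
  rw [abs_mul, abs_of_nonneg (sq_nonneg ‖z i‖)]
  exact mul_le_of_le_one_right (abs_nonneg _) hzi

lemma integral_exp_neg_mul_norm_sq {b : ℝ} (hb : 0 < b) :
    ∫ z : ℂ, Real.exp (-(b * ‖z‖ ^ 2)) = Real.pi / b := by
  simpa using GaussianFourier.integral_rexp_neg_mul_sq_norm (V := ℂ) hb

lemma lintegral_exp_neg_diagForm {a : n → ℝ} (ha : ∀ i, 0 < a i) :
    ∫⁻ z, ENNReal.ofReal (Real.exp (-diagForm a z)) =
      ENNReal.ofReal (Real.pi ^ Fintype.card n) * ENNReal.ofReal (∏ i, (a i)⁻¹) := by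
  have hexp (z : n → ℂ) :
      Real.exp (-diagForm a z) = ∏ i, Real.exp (-(a i * ‖z i‖ ^ 2)) := by
    rw [diagForm, ← Finset.sum_neg_distrib, Real.exp_sum]
  have hint (i : n) : Integrable fun z : ℂ => Real.exp (-(a i * ‖z‖ ^ 2)) :=
    .of_integral_ne_zero <| by
      rw [integral_exp_neg_mul_norm_sq (ha i)]
      exact (div_pos Real.pi_pos (ha i)).ne'
  have hprod : Integrable fun z : n → ℂ => ∏ i, Real.exp (-(a i * ‖z i‖ ^ 2)) :=
    Integrable.fintype_prod hint
  simp_rw [hexp]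
  rw [← ofReal_integral_eq_lintegral_ofReal hprod
      (.of_forall fun z => Finset.prod_nonneg fun i _ => (Real.exp_pos _).le),
    integral_fintype_prod_volume_eq_prod (fun i (z : ℂ) => Real.exp (-(a i * ‖z‖ ^ 2))),
    ← ENNReal.ofReal_mul (by positivity)]
  simp [integral_exp_neg_mul_norm_sq, ha, div_eq_mul_inv, Finset.prod_mul_distrib]

end DiagForm

section HaarUnitary

variable {n : Type*} [Fintype n] [DecidableEq n]

@[fun_prop]
lemma continuous_unitaryGroup_inv_mulVec :
    Continuous fun q : Matrix.unitaryGroup n ℂ × (n → ℂ) => (q.1⁻¹).1 *ᵥ q.2 :=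
  (continuous_subtype_val.comp (continuous_inv.comp continuous_fst)).matrix_mulVec continuous_snd

variable [MeasurableSpace (Matrix.unitaryGroup n ℂ)] [BorelSpace (Matrix.unitaryGroup n ℂ)]
  (μ : Measure (Matrix.unitaryGroup n ℂ))

lemma lintegral_inv_mulVec_eq_of_sum_norm_sq_eq [μ.IsMulLeftInvariant]
    (G : (n → ℂ) → ENNReal) {z w : n → ℂ}
    (h : ∑ i, ‖z i‖ ^ 2 = ∑ i, ‖w i‖ ^ 2) :
    ∫⁻ U, G ((U⁻¹).1 *ᵥ z) ∂μ = ∫⁻ U, G ((U⁻¹).1 *ᵥ w) ∂μ := by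
  obtain ⟨V, rfl⟩ := exists_unitaryGroup_mulVec_eq h
  rw [← lintegral_mul_left_eq_self (fun U => G ((U⁻¹).1 *ᵥ z)) V⁻¹]
  simp [Matrix.mulVec_mulVec]

lemma integrable_exp_mul_diagForm [IsFiniteMeasure μ] (c : n → ℝ) (t : ℝ) {φ : n → ℂ}
    (hφ : ∑ i, ‖φ i‖ ^ 2 = 1) :
    Integrable (fun U => Real.exp (t * diagForm c ((U⁻¹).1 *ᵥ φ))) μ := by
  have hcont : Continuous fun U : Matrix.unitaryGroup n ℂ => diagForm c ((U⁻¹).1 *ᵥ φ) := by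
    fun_prop
  exact integrable_exp_mul_of_mem_Icc hcont.measurable.aemeasurable <| .of_forall fun U =>
    abs_le.1 <| abs_diagForm_le c <| (sum_norm_sq_mulVec U⁻¹ φ).trans hφ

variable [μ.IsMulLeftInvariant] [IsProbabilityMeasure μ]

lemma lintegral_eq_lintegral_lintegral_smul_inv_mulVec {G : (n → ℂ) → ENNReal}
    (hG : Measurable G) {φ : n → ℂ} (hφ : ∑ i, ‖φ i‖ ^ 2 = 1) :
    ∫⁻ z, G z =
      ∫⁻ U, (∫⁻ z : n → ℂ, G (((√(∑ i, ‖z i‖ ^ 2) : ℝ) : ℂ) • ((U⁻¹).1 *ᵥ φ))) ∂μ := by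
  have hpolar (z : n → ℂ) :
      ∑ i, ‖z i‖ ^ 2 = ∑ i, ‖(((√(∑ i, ‖z i‖ ^ 2) : ℝ) : ℂ) • φ) i‖ ^ 2 := by
    have hnonneg : 0 ≤ ∑ i, ‖z i‖ ^ 2 := by positivity
    simp [mul_pow, ← Finset.mul_sum, hφ, Real.sq_sqrt hnonneg]
  calc ∫⁻ z, G z = ∫⁻ U, (∫⁻ z : n → ℂ, G ((U⁻¹).1 *ᵥ z)) ∂μ := by
        simp only [(measurePreserving_mulVec _).lintegral_comp hG, lintegral_const, measure_univ,
          mul_one]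
    _ = ∫⁻ z : n → ℂ, ∫⁻ U, G ((U⁻¹).1 *ᵥ z) ∂μ :=
        lintegral_lintegral_swap
          (hG.comp continuous_unitaryGroup_inv_mulVec.measurable).aemeasurable
    _ = ∫⁻ z : n → ℂ, ∫⁻ U, G ((U⁻¹).1 *ᵥ (((√(∑ i, ‖z i‖ ^ 2) : ℝ) : ℂ) • φ)) ∂μ :=
        lintegral_congr fun z => lintegral_inv_mulVec_eq_of_sum_norm_sq_eq μ G (hpolar z)
    _ = ∫⁻ z : n → ℂ, ∫⁻ U, G (((√(∑ i, ‖z i‖ ^ 2) : ℝ) : ℂ) • ((U⁻¹).1 *ᵥ φ)) ∂μ := by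
        simp_rw [Matrix.mulVec_smul]
    _ = _ := lintegral_lintegral_swap <| Measurable.aemeasurable <| hG.comp <|
        Continuous.measurable <| by fun_prop

theorem lintegral_inv_diagForm_pow {a : n → ℝ} (ha : ∀ i, 0 < a i) {φ : n → ℂ}
    (hφ : ∑ i, ‖φ i‖ ^ 2 = 1) :
    ∫⁻ U, ENNReal.ofReal (diagForm a ((U⁻¹).1 *ᵥ φ) ^ Fintype.card n)⁻¹ ∂μ =
      ENNReal.ofReal (∏ i, (a i)⁻¹) := by
  have hpos (U : Matrix.unitaryGroup n ℂ) : 0 < diagForm a ((U⁻¹).1 *ᵥ φ) :=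
    diagForm_pos ha (by rw [sum_norm_sq_mulVec, hφ])
  have hradial (U : Matrix.unitaryGroup n ℂ) (z : n → ℂ) :
      diagForm a (((√(∑ i, ‖z i‖ ^ 2) : ℝ) : ℂ) • ((U⁻¹).1 *ᵥ φ)) =
        diagForm (fun _ => diagForm a ((U⁻¹).1 *ᵥ φ)) z := by
    rw [diagForm_smul, diagForm_const, Real.sq_sqrt (by positivity), mul_comm]
  have hgauss := lintegral_eq_lintegral_lintegral_smul_inv_mulVec μ
    (G := fun z => ENNReal.ofReal (Real.exp (-diagForm a z)))
    (by fun_prop) hφ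
  simp only [hradial, lintegral_exp_neg_diagForm, ha, hpos, implies_true,
    Finset.prod_const, Finset.card_univ, inv_pow] at hgauss
  rw [lintegral_const_mul] at hgauss
  · exact ((ENNReal.mul_right_inj (by simp [Real.pi_pos]) ENNReal.ofReal_ne_top).1 hgauss).symm
  · have hcont : Continuous fun U : Matrix.unitaryGroup n ℂ => diagForm a ((U⁻¹).1 *ᵥ φ) := by
      fun_prop
    exact (hcont.measurable.pow_const _).inv.ennreal_ofReal

theorem mgf_diagForm_le {c : n → ℝ} {t : ℝ} (hsum : ∑ i, c i = 0) (ht : ∀ i, |t * c i| ≤ 1 / 2)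
    {φ : n → ℂ} (hφ : ∑ i, ‖φ i‖ ^ 2 = 1) :
    mgf (fun U => diagForm c ((U⁻¹).1 *ᵥ φ)) μ (t * Fintype.card n) ≤
      Real.exp (2 * t ^ 2 * ∑ i, c i ^ 2) := by
  have ha (i : n) : 0 < 1 - t * c i := by linarith [le_abs_self (t * c i), ht i]
  have hunit (U : Matrix.unitaryGroup n ℂ) : ∑ i, ‖((U⁻¹).1 *ᵥ φ) i‖ ^ 2 = 1 :=
    (sum_norm_sq_mulVec U⁻¹ φ).trans hφ
  have hpointwise (U : Matrix.unitaryGroup n ℂ) :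
      Real.exp (t * Fintype.card n * diagForm c ((U⁻¹).1 *ᵥ φ)) ≤
        (diagForm (fun i => 1 - t * c i) ((U⁻¹).1 *ᵥ φ) ^ Fintype.card n)⁻¹ := by
    have hpos := diagForm_pos ha (hunit U)
    rw [diagForm_one_sub_smul t c (hunit U)] at hpos ⊢
    rw [mul_comm t, mul_assoc, ← neg_neg (_ * (t * _)), Real.exp_neg, ← mul_neg, Real.exp_nat_mul]
    gcongr
    exact Real.one_sub_le_exp_neg _
  have hprod : ∏ i, (1 - t * c i)⁻¹ ≤ Real.exp (2 * t ^ 2 * ∑ i, c i ^ 2) := by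
    have h := prod_inv_one_sub_le_exp (by rw [← Finset.mul_sum, hsum, mul_zero]) fun i _ => ht i
    simpa only [mul_pow, ← Finset.mul_sum, ← mul_assoc] using h
  rw [← ENNReal.ofReal_le_ofReal_iff (Real.exp_pos _).le, mgf, ofReal_integral_eq_lintegral_ofReal
    (integrable_exp_mul_diagForm μ c _ hφ) (.of_forall fun U => (Real.exp_pos _).le)]
  calc _ ≤ ∫⁻ U, ENNReal.ofReal
          (diagForm (fun i => 1 - t * c i) ((U⁻¹).1 *ᵥ φ) ^ Fintype.card n)⁻¹ ∂μ :=
        lintegral_mono fun U => ENNReal.ofReal_le_ofReal (hpointwise U)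
    _ = ENNReal.ofReal (∏ i, (1 - t * c i)⁻¹) := lintegral_inv_diagForm_pow μ ha hφ
    _ ≤ _ := ENNReal.ofReal_le_ofReal hprod

end HaarUnitary

section CenteredIndicator

variable {n : Type*} [Fintype n]

lemma card_div_card_mem_Icc (s : Finset n) :
    (s.card / Fintype.card n : ℝ) ∈ Set.Icc 0 1 :=
  ⟨by positivity, div_le_one_of_le₀ (by exact_mod_cast s.card_le_univ) (by positivity)⟩

lemma card_mul_card_div_card (s : Finset n) :
    (Fintype.card n * (s.card / Fintype.card n) : ℝ) = s.card :=
  mul_div_cancel_of_imp' fun h => by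
    have hcard : Fintype.card n = 0 := by exact_mod_cast h
    exact_mod_cast Nat.le_zero.1 (hcard ▸ s.card_le_univ)

variable [DecidableEq n]

/-- The indicator function of `s` minus its mean `#s / #n`, that is, the diagonal of the
trace-free part of the coordinate projection onto `ℂˢ`. -/
def centeredIndicator (s : Finset n) (i : n) : ℝ :=
  (if i ∈ s then 1 else 0) - s.card / Fintype.card n

lemma abs_centeredIndicator_le_one (s : Finset n) (i : n) : |centeredIndicator s i| ≤ 1 := by
  obtain ⟨h0, h1⟩ := card_div_card_mem_Icc s
  unfold centeredIndicator
  split_ifs <;> rw [abs_le] <;> constructor <;> linarith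

lemma sum_centeredIndicator (s : Finset n) : ∑ i, centeredIndicator s i = 0 := by
  simp [centeredIndicator, card_mul_card_div_card]

lemma sum_centeredIndicator_sq_le (s : Finset n) :
    ∑ i, centeredIndicator s i ^ 2 ≤ s.card := by
  set p : ℝ := s.card / Fintype.card n
  have hsq (i : n) : centeredIndicator s i ^ 2 =
      (if i ∈ s then 1 else 0) - p * (centeredIndicator s i + if i ∈ s then 1 else 0) := by
    unfold centeredIndicator
    split_ifs <;> ring
  have hp0 : 0 ≤ p := (card_div_card_mem_Icc s).1
  simp only [hsq, Finset.sum_sub_distrib, ← Finset.mul_sum, Finset.sum_add_distrib,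
    sum_centeredIndicator]
  simpa using mul_nonneg hp0 s.card.cast_nonneg

lemma diagForm_centeredIndicator (s : Finset n) {z : n → ℂ} (hz : ∑ i, ‖z i‖ ^ 2 = 1) :
    diagForm (centeredIndicator s) z = ∑ i ∈ s, ‖z i‖ ^ 2 - s.card / Fintype.card n := by
  simp [diagForm, centeredIndicator, sub_mul, ← Finset.mul_sum, hz]

theorem mgf_diagForm_centeredIndicator_le [MeasurableSpace (Matrix.unitaryGroup n ℂ)]
    [BorelSpace (Matrix.unitaryGroup n ℂ)] (μ : Measure (Matrix.unitaryGroup n ℂ))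
    [IsProbabilityMeasure μ] [μ.IsMulLeftInvariant] (s : Finset n) {t : ℝ} (ht : |t| ≤ 1 / 2)
    {φ : n → ℂ} (hφ : ∑ i, ‖φ i‖ ^ 2 = 1) :
    mgf (fun U => diagForm (centeredIndicator s) ((U⁻¹).1 *ᵥ φ)) μ (t * Fintype.card n) ≤
      Real.exp (2 * t ^ 2 * s.card) := by
  refine (mgf_diagForm_le μ (sum_centeredIndicator s) (fun i => ?_) hφ).trans ?_
  · rw [abs_mul]
    exact (mul_le_of_le_one_right (abs_nonneg t) (abs_centeredIndicator_le_one s i)).trans ht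
  · gcongr
    exact sum_centeredIndicator_sq_le s

end CenteredIndicator

section MaximalInequality

lemma sq_le_sq_add_exp {A : ℝ} (hA : 0 ≤ A) (y : ℝ) :
    y ^ 2 ≤ A ^ 2 + (2 * A + 2) * Real.exp (-A) * (Real.exp y + Real.exp (-y)) := by
  have habs : y ^ 2 ≤ A ^ 2 + (2 * A + 2) * Real.exp (|y| - A) := by
    rw [← sq_abs y]
    rcases le_total |y| A with h | h
    · nlinarith [abs_nonneg y, Real.exp_pos (|y| - A)]
    · nlinarith [Real.quadratic_le_exp_of_nonneg (sub_nonneg.2 h)]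
  refine habs.trans ?_
  rw [sub_eq_neg_add, Real.exp_add, ← mul_assoc]
  gcongr
  exact Real.exp_abs_le y

variable {Ω ι : Type*} [MeasurableSpace Ω] {μ : Measure Ω} [IsProbabilityMeasure μ] [Fintype ι]
  {X : ι → Ω → ℝ}

lemma integral_iSup_sq_le {A t : ℝ} (hA : 0 ≤ A) (ht : t ≠ 0)
    (hX : ∀ i r, Integrable (fun ω => Real.exp (r * X i ω)) μ) :
    ∫ ω, ⨆ i, X i ω ^ 2 ∂μ ≤
      (A ^ 2 + (2 * A + 2) * Real.exp (-A) * ∑ i, (mgf (X i) μ t + mgf (X i) μ (-t))) / t ^ 2 := by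
  set S : Ω → ℝ := fun ω => ∑ i, (Real.exp (t * X i ω) + Real.exp (-t * X i ω)) with hS
  have hS_int : Integrable S μ :=
    integrable_finsetSum _ fun i _ => (hX i t).add (hX i (-t))
  have hS_integral : ∫ ω, S ω ∂μ = ∑ i, (mgf (X i) μ t + mgf (X i) μ (-t)) := by
    rw [hS, integral_finsetSum (f := fun i ω => Real.exp (t * X i ω) + Real.exp (-t * X i ω)) _
      fun i _ => (hX i t).add (hX i (-t))]
    exact Finset.sum_congr rfl fun i _ => integral_add (hX i t) (hX i (-t))
  have hdom_int : Integrable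
      (fun ω => (A ^ 2 + (2 * A + 2) * Real.exp (-A) * S ω) / t ^ 2) μ :=
    ((integrable_const _).add (hS_int.const_mul _)).div_const _
  have hdom (ω : Ω) :
      ⨆ i, X i ω ^ 2 ≤ (A ^ 2 + (2 * A + 2) * Real.exp (-A) * S ω) / t ^ 2 := by
    refine Real.iSup_le (fun i => ?_) (by positivity)
    rw [le_div_iff₀ (by positivity), mul_comm, ← mul_pow]
    refine (sq_le_sq_add_exp hA _).trans ?_
    rw [← neg_mul]
    gcongr
    exact Finset.single_le_sum (f := fun i => Real.exp (t * X i ω) + Real.exp (-t * X i ω))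
      (fun _ _ => by positivity) (Finset.mem_univ i)
  refine (integral_mono_of_nonneg (.of_forall fun ω => Real.iSup_nonneg fun i => sq_nonneg _)
    hdom_int (.of_forall hdom)).trans_eq ?_
  rw [integral_div, integral_add (integrable_const _) (hS_int.const_mul _), integral_const_mul,
    hS_integral, integral_const, probReal_univ, one_smul]

theorem integral_iSup_sq_lt_of_mgf_le {v : ℝ} (hv : 0 < v)
    (hcard : 17 ≤ Real.log (Fintype.card ι))
    (hX : ∀ i r, Integrable (fun ω => Real.exp (r * X i ω)) μ)
    (hmgf : ∀ i r, v * r ^ 2 = Real.log (Fintype.card ι) →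
      mgf (X i) μ r ≤ Real.exp (v * r ^ 2)) :
    ∫ ω, ⨆ i, X i ω ^ 2 ∂μ < 9 / 2 * v * Real.log (Fintype.card ι) := by
  set N : ℝ := ((Fintype.card ι : ℕ) : ℝ)
  set L := Real.log N
  have hN : 0 < N := lt_of_le_of_ne (Nat.cast_nonneg _) fun h => by
    simp [L, ← h] at hcard; linarith
  -- This `t` makes every moment generating function at most `exp L = N`, and the truncation level
  -- `A = 2 * L` below then cancels the `2 * N ^ 2` of the union bound.
  set t := √(L / v)
  have ht : 0 < t := Real.sqrt_pos.2 (by positivity)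
  have ht_sq : v * t ^ 2 = L := by rw [Real.sq_sqrt (by positivity)]; field_simp
  have hmgf_le (i : ι) (r : ℝ) (hr : r ^ 2 = t ^ 2) : mgf (X i) μ r ≤ N := by
    have h := hmgf i r (hr ▸ ht_sq)
    rwa [hr, ht_sq, Real.exp_log hN] at h
  have hsum : ∑ i, (mgf (X i) μ t + mgf (X i) μ (-t)) ≤ 2 * N ^ 2 := by
    calc _ ≤ ∑ _i : ι, (N + N) := Finset.sum_le_sum fun i _ =>
          add_le_add (hmgf_le i t rfl) (hmgf_le i (-t) (neg_sq t))
      _ = 2 * N ^ 2 := by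
          rw [Finset.sum_const, Finset.card_univ, nsmul_eq_mul]; ring
  have hexp : Real.exp (-(2 * L)) = (N ^ 2)⁻¹ := by
    rw [Real.exp_neg, mul_comm, Real.exp_mul, Real.exp_log hN, Real.rpow_two]
  calc ∫ ω, ⨆ i, X i ω ^ 2 ∂μ
      ≤ ((2 * L) ^ 2 + (2 * (2 * L) + 2) * Real.exp (-(2 * L)) *
          ∑ i, (mgf (X i) μ t + mgf (X i) μ (-t))) / t ^ 2 :=
        integral_iSup_sq_le (by positivity) ht.ne' hX
    _ ≤ ((2 * L) ^ 2 + (2 * (2 * L) + 2) * (N ^ 2)⁻¹ * (2 * N ^ 2)) / t ^ 2 := by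
        rw [hexp]; gcongr
    _ = (4 * L ^ 2 + 8 * L + 4) / t ^ 2 := by field_simp; ring
    _ < 9 / 2 * v * L := by
        rw [div_lt_iff₀ (by positivity), mul_right_comm, mul_assoc (9 / 2), ht_sq]
        nlinarith

end MaximalInequality

section RotatedProjection

lemma dotc_rotProj_coordProj {D : ℕ} (U : UG D) (s : Finset (Fin D)) (φ : Fin D → ℂ) :
    dotc φ ((rotProj U (coordProj D s)).mulVec φ) =
      ((∑ i ∈ s, ‖((U⁻¹).1 *ᵥ φ) i‖ ^ 2 : ℝ) : ℂ) := by
  have hstar : (U⁻¹).1ᴴ = U.1 := Matrix.conjTranspose_conjTranspose U.1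
  calc dotc φ ((rotProj U (coordProj D s)).mulVec φ)
      = star ((U⁻¹).1 *ᵥ φ) ⬝ᵥ (coordProj D s *ᵥ ((U⁻¹).1 *ᵥ φ)) := by
        rw [Matrix.star_mulVec, hstar, ← Matrix.dotProduct_mulVec, Matrix.mulVec_mulVec,
          Matrix.mulVec_mulVec]
        rfl
    _ = _ := by
        simp [dotProduct, coordProj, Matrix.mulVec_diagonal, Complex.conj_mul']

lemma nsq_eq_one_of_dotc_self_eq_one {D : ℕ} {v : Fin D → ℂ} (h : dotc v v = 1) : nsq v = 1 := by
  have h' : ((nsq v : ℝ) : ℂ) = 1 := by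
    simpa [nsq, dotc, Complex.conj_mul'] using h
  exact_mod_cast h'

lemma le_log_and_two_mul_log_le_of_exp_mul_log_lt {x : ℝ} (hx : 1 ≤ x) {D d : ℕ}
    (h₁ : Real.exp x * Real.log D < d) (h₂ : (d : ℝ) < D / Real.exp x) :
    x ≤ Real.log D ∧ 2 * Real.log D ≤ d := by
  have hlog : 0 ≤ Real.log D := Real.log_natCast_nonneg D
  have hd : (1 : ℝ) ≤ d := by
    exact_mod_cast Nat.cast_pos.1 ((mul_nonneg (Real.exp_pos x).le hlog).trans_lt h₁)
  have hD : Real.exp x ≤ D := by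
    simpa using (lt_div_iff₀ (Real.exp_pos x)).1 (hd.trans_lt h₂) |>.le
  refine ⟨(Real.le_log_iff_exp_le ((Real.exp_pos x).trans_le hD)).2 hD, h₁.le.trans' ?_⟩
  gcongr
  linarith [Real.add_one_le_exp x]

theorem stmt15_general {D : ℕ} {ι : Type*} [Fintype ι] (hcard : 17 ≤ Real.log (Fintype.card ι))
    (φ : ι → Fin D → ℂ) (hφ : ∀ α, nsq (φ α) = 1) (s : Finset (Fin D))
    (hs : 2 * Real.log (Fintype.card ι) ≤ s.card) (μ : Measure (UG D)) [IsProbabilityMeasure μ]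
    [μ.IsMulLeftInvariant] :
    (∫ U, (⨆ α, ((dotc (φ α) ((rotProj U (coordProj D s)).mulVec (φ α))).re
      - s.card / D) ^ 2) ∂μ) < 9 * s.card * Real.log (Fintype.card ι) / (D : ℝ) ^ 2 := by
  have hs_pos : (0 : ℝ) < s.card := by linarith
  have hD : (0 : ℝ) < D := hs_pos.trans_le <| by simpa using s.card_le_univ
  have hform (U : UG D) (α : ι) :
      (dotc (φ α) ((rotProj U (coordProj D s)).mulVec (φ α))).re - s.card / D =
        diagForm (centeredIndicator s) ((U⁻¹).1 *ᵥ φ α) := by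
    rw [dotc_rotProj_coordProj, Complex.ofReal_re,
      diagForm_centeredIndicator s ((sum_norm_sq_mulVec U⁻¹ (φ α)).trans (hφ α)), Fintype.card_fin]
  have hmgf (α : ι) (r : ℝ) (hr : 2 * s.card / (D : ℝ) ^ 2 * r ^ 2 = Real.log (Fintype.card ι)) :
      mgf (fun U : UG D => diagForm (centeredIndicator s) ((U⁻¹).1 *ᵥ φ α)) μ r ≤
        Real.exp (2 * s.card / (D : ℝ) ^ 2 * r ^ 2) := by
    have hr_sq : 2 * s.card * (r / D) ^ 2 = Real.log (Fintype.card ι) := by rw [← hr]; ring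
    have hr_abs : |r / D| ≤ 1 / 2 := abs_le_of_sq_le_sq (by nlinarith) (by norm_num)
    have h := mgf_diagForm_centeredIndicator_le μ s hr_abs (hφ α)
    rw [Fintype.card_fin, div_mul_cancel₀ r hD.ne'] at h
    exact h.trans_eq (by congr 1; ring)
  simp only [hform]
  calc _ < 9 / 2 * (2 * s.card / (D : ℝ) ^ 2) * Real.log (Fintype.card ι) :=
        integral_iSup_sq_lt_of_mgf_le (by positivity) hcard
          (fun α r => integrable_exp_mul_diagForm μ _ r (hφ α)) hmgf
    _ = _ := by ring

end RotatedProjection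

theorem stmt15 :
    ∃ C₀ : ℝ, 4 < C₀ ∧
      ∀ (D d : ℕ), C₀ * Real.log D < d → (d : ℝ) < D / C₀ →
      ∀ φ : Fin D → Fin D → ℂ, (∀ α β, dotc (φ α) (φ β) = if α = β then 1 else 0) →
      ∀ s : Finset (Fin D), s.card = d →
      ∀ (μ : Measure (UG D)), μ.IsHaarMeasure → IsProbabilityMeasure μ →
      (∫ U, (⨆ α, ((dotc (φ α) ((rotProj U (coordProj D s)).mulVec (φ α))).re - d / D) ^ 2) ∂μ)
        < 9 * d * Real.log D / (D : ℝ) ^ 2 := by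
  refine ⟨Real.exp 17, by linarith [Real.add_one_le_exp (17 : ℝ)], ?_⟩
  rintro D _ h₁ h₂ φ hφ s rfl μ _ _
  obtain ⟨hlog, hcard⟩ := le_log_and_two_mul_log_le_of_exp_mul_log_lt (by norm_num) h₁ h₂
  simpa using stmt15_general (by simpa using hlog) φ
    (fun α => nsq_eq_one_of_dotc_self_eq_one (by simp [hφ])) s (by simpa using hcard) μ
end
end

section
/- Let d, D be positive integers with 1 < d and D > 2d + 2, and define f : (0,1) → ℝ by f(t) = (1−t)^{d+1−D}·(1+t)^{1−d} + (1+t)^{d+1−D}·(1−t)^{1−d}. Then f is strictly increasing on the interval (0,1) (its derivative is positive at every t ∈ (0,1)). -/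
/-! On `(0, 1)` the function factors as
`(1 - t)^p (1 + t)^q + (1 + t)^p (1 - t)^q = (1 - t²)^q ((1 - t)^(p-q) + (1 + t)^(p-q))`.
For `q < 0` the first factor has positive derivative. The second one has nonnegative derivative as
soon as `s ↦ s^(p-q)` is convex on `(0, ∞)`, i.e. when `p - q` lies outside `(0, 1)`. -/

open Set

theorem mul_rpow_sub_one_le_mul_rpow_sub_one {x y m : ℝ} (hx : 0 < x) (hxy : x ≤ y)
    (hm : m ≤ 0 ∨ 1 ≤ m) : m * x ^ (m - 1) ≤ m * y ^ (m - 1) := by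
  rcases hm with hm | hm
  · exact mul_le_mul_of_nonpos_left
      (Real.rpow_le_rpow_of_nonpos hx hxy (by linarith)) hm
  · exact mul_le_mul_of_nonneg_left
      (Real.rpow_le_rpow hx.le hxy (by linarith)) (by linarith)

theorem rpow_mul_rpow_add_rpow_mul_rpow {x y : ℝ} (hx : 0 < x) (hy : 0 < y) (p q : ℝ) :
    x ^ p * y ^ q + y ^ p * x ^ q = (x * y) ^ q * (x ^ (p - q) + y ^ (p - q)) := by
  rw [Real.mul_rpow hx.le hy.le, Real.rpow_sub hx, Real.rpow_sub hy]
  field_simp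

theorem hasDerivAt_one_sub_sq_rpow {t : ℝ} (ht : 1 - t ^ 2 ≠ 0) (q : ℝ) :
    HasDerivAt (fun s : ℝ => (1 - s ^ 2) ^ q) (-(2 * t) * q * (1 - t ^ 2) ^ (q - 1)) t := by
  have h : HasDerivAt (fun s : ℝ => 1 - s ^ 2) (-(2 * t)) t := by
    simpa using (hasDerivAt_pow 2 t).const_sub 1
  exact h.rpow_const (Or.inl ht)

theorem hasDerivAt_one_sub_rpow_add_one_add_rpow {t : ℝ} (hsub : 1 - t ≠ 0) (hadd : 1 + t ≠ 0)
    (m : ℝ) :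
    HasDerivAt (fun s : ℝ => (1 - s) ^ m + (1 + s) ^ m)
      (m * (1 + t) ^ (m - 1) - m * (1 - t) ^ (m - 1)) t := by
  have h₁ := ((hasDerivAt_id' t).const_sub 1).rpow_const (p := m) (Or.inl hsub)
  have h₂ := ((hasDerivAt_id' t).const_add 1).rpow_const (p := m) (Or.inl hadd)
  exact (h₁.add h₂).congr_deriv (by ring)

theorem deriv_one_sub_sq_rpow_mul_pos {q m t : ℝ} (hq : q < 0) (hm : m ≤ 0 ∨ 1 ≤ m)
    (ht : t ∈ Ioo (0 : ℝ) 1) :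
    0 < deriv (fun s : ℝ => (1 - s ^ 2) ^ q * ((1 - s) ^ m + (1 + s) ^ m)) t := by
  obtain ⟨ht₀, ht₁⟩ := ht
  have hsub : 0 < 1 - t := by linarith
  have hadd : 0 < 1 + t := by linarith
  have hle : 1 - t ≤ 1 + t := by linarith
  have hsq : 0 < 1 - t ^ 2 := by nlinarith
  have hderiv := (hasDerivAt_one_sub_sq_rpow hsq.ne' q).mul
    (hasDerivAt_one_sub_rpow_add_one_add_rpow hsub.ne' hadd.ne' m)
  refine hderiv.deriv.symm ▸ add_pos_of_pos_of_nonneg ?_ ?_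
  · have : 0 < -(2 * t) * q := mul_pos_of_neg_of_neg (by linarith) hq
    positivity
  · have := sub_nonneg.2 (mul_rpow_sub_one_le_mul_rpow_sub_one hsub hle hm)
    positivity

theorem strictMonoOn_of_isOpen_of_deriv_pos {s : Set ℝ} {f : ℝ → ℝ} (hconv : Convex ℝ s)
    (hs : IsOpen s) (hf : ∀ x ∈ s, 0 < deriv f x) : StrictMonoOn f s :=
  strictMonoOn_of_deriv_pos hconv
    (fun x hx => (differentiableAt_of_deriv_ne_zero
      (hf x hx).ne').continuousAt.continuousWithinAt)
    (hs.interior_eq.symm ▸ hf)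

theorem stmt17_general {p q : ℝ} (hq : q < 0) (hpq : p ≤ q ∨ q + 1 ≤ p) :
    StrictMonoOn (fun t : ℝ => (1 - t) ^ p * (1 + t) ^ q + (1 + t) ^ p * (1 - t) ^ q)
      (Ioo 0 1) ∧
    ∀ t ∈ Ioo (0 : ℝ) 1,
      0 < deriv (fun t : ℝ => (1 - t) ^ p * (1 + t) ^ q + (1 + t) ^ p * (1 - t) ^ q) t := by
  have hfactor : EqOn (fun t : ℝ => (1 - t) ^ p * (1 + t) ^ q + (1 + t) ^ p * (1 - t) ^ q)
      (fun t => (1 - t ^ 2) ^ q * ((1 - t) ^ (p - q) + (1 + t) ^ (p - q))) (Ioo 0 1) := by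
    rintro t ⟨ht₀, ht₁⟩
    have hsq : 1 - t ^ 2 = (1 - t) * (1 + t) := by ring
    simpa only [hsq] using
      rpow_mul_rpow_add_rpow_mul_rpow (sub_pos.2 ht₁) (add_pos one_pos ht₀) p q
  have hm : p - q ≤ 0 ∨ 1 ≤ p - q := hpq.imp sub_nonpos.2 le_sub_iff_add_le'.2
  have hpos : ∀ t ∈ Ioo (0 : ℝ) 1,
      0 < deriv (fun t : ℝ => (1 - t) ^ p * (1 + t) ^ q + (1 + t) ^ p * (1 - t) ^ q) t := by
    intro t ht
    rw [hfactor.deriv isOpen_Ioo ht]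
    exact deriv_one_sub_sq_rpow_mul_pos hq hm ht
  exact ⟨strictMonoOn_of_isOpen_of_deriv_pos (convex_Ioo 0 1) isOpen_Ioo hpos, hpos⟩

theorem stmt17 (d D : ℕ) (hd : 1 < d) (hD : 2 * d + 2 < D) :
    StrictMonoOn (fun t : ℝ =>
        (1 - t) ^ ((d : ℤ) + 1 - D) * (1 + t) ^ ((1 : ℤ) - d) +
          (1 + t) ^ ((d : ℤ) + 1 - D) * (1 - t) ^ ((1 : ℤ) - d))
      (Set.Ioo (0 : ℝ) 1) ∧
    ∀ t ∈ Set.Ioo (0 : ℝ) 1,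
      0 < deriv (fun t : ℝ =>
        (1 - t) ^ ((d : ℤ) + 1 - D) * (1 + t) ^ ((1 : ℤ) - d) +
          (1 + t) ^ ((d : ℤ) + 1 - D) * (1 - t) ^ ((1 : ℤ) - d)) t := by
  simpa only [Real.rpow_intCast] using stmt17_general (p := ((d + 1 - D : ℤ) : ℝ))
    (q := ((1 - d : ℤ) : ℝ)) (Int.cast_lt_zero.2 (by omega)) (Or.inl (Int.cast_le.2 (by omega)))
end

section
/- For integers d, D with 1 < d < D − 1 and a real a with 0 ≤ a < 1/4, define J(d,D,a) = ((D−1)!/((d−1)!·(D−d−1)!)) · ∫_{1/2 − √(1/4 − a)}^{1/2 + √(1/4 − a)} (w·(1−w) − a)^{D−2} / ( w^{D−d−1}·(1−w)^{d−1} ) dw. If moreover 1 < d and D > 2d + 2, then 0 ≤ J(d,D,a) ≤ (1 − 4a)^{D − 3/2} ≤ e^{−4a·(D − 3/2)} for all 0 ≤ a < 1/4. -/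
/-! In the coordinate `w = (1 + r * t) / 2` with `r = √(1 - 4 * a)`, the integral becomes
`J(d, D, a) = r ^ (2 * D - 3) * I(r)`, where `I(r)` is a constant multiple of
`∫ t in -1..1, (1 - t ^ 2) ^ (D - 2) * h (r * t)` and
`h x = ((1 + x) ^ (D - d - 1) * (1 - x) ^ (d - 1))⁻¹`. The function `h` is log-convex, hence convex,
so `h x + h (-x)` increases with `|x|`; averaging over `t ↦ -t` shows that `I` is monotone on
`[0, 1]`. At `a = 0` the integral is Euler's Beta integral, which gives `I 1 = 1`.
-/

open MeasureTheory intervalIntegral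

noncomputable section

/-- The quantity J(d,D,a). -/
def Jfun (d D : ℕ) (a : ℝ) : ℝ :=
  (Nat.factorial (D - 1) : ℝ) / (Nat.factorial (d - 1) * Nat.factorial (D - d - 1)) *
    ∫ x in (1 / 2 - Real.sqrt (1 / 4 - a))..(1 / 2 + Real.sqrt (1 / 4 - a)),
      (x * (1 - x) - a) ^ (D - 2) / (x ^ (D - d - 1) * (1 - x) ^ (d - 1))

section Convexity

variable {E : Type*} [AddCommGroup E] [Module ℝ E] {s : Set E}

theorem convexOn_exp_comp {f : E → ℝ} (hf : ConvexOn ℝ s f) :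
    ConvexOn ℝ s fun x => Real.exp (f x) :=
  ⟨hf.1, fun _ hx _ hy _ _ ha hb hab =>
    (Real.exp_le_exp.2 (hf.2 hx hy ha hb hab)).trans
      (convexOn_exp.2 trivial trivial ha hb hab)⟩

theorem concaveOn_log_comp {u : E → ℝ} (hu : ConcaveOn ℝ s u) (hpos : ∀ x ∈ s, 0 < u x) :
    ConcaveOn ℝ s fun x => Real.log (u x) := by
  refine ⟨hu.1, fun x hx y hy a b ha hb hab => ?_⟩
  have hlog := strictConcaveOn_log_Ioi.concaveOn
  have hmem : a • u x + b • u y ∈ Set.Ioi (0 : ℝ) :=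
    hlog.1 (hpos x hx) (hpos y hy) ha hb hab
  exact (hlog.2 (hpos x hx) (hpos y hy) ha hb hab).trans
    (Real.log_le_log hmem (hu.2 hx hy ha hb hab))

theorem convexOn_inv_pow_mul_pow {u v : E → ℝ} (hu : ConcaveOn ℝ s u) (hv : ConcaveOn ℝ s v)
    (hu0 : ∀ x ∈ s, 0 < u x) (hv0 : ∀ x ∈ s, 0 < v x) (m n : ℕ) :
    ConvexOn ℝ s fun x => (u x ^ m * v x ^ n)⁻¹ := by
  have hlog : ConcaveOn ℝ s fun x => m * Real.log (u x) + n * Real.log (v x) :=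
    ((concaveOn_log_comp hu hu0).smul m.cast_nonneg).add
      ((concaveOn_log_comp hv hv0).smul n.cast_nonneg)
  refine (convexOn_exp_comp hlog.neg).congr fun x hx => ?_
  simp only [Pi.neg_apply, Real.exp_neg, Real.exp_add, Real.exp_nat_mul,
    Real.exp_log (hu0 x hx), Real.exp_log (hv0 x hx)]

theorem add_neg_le_add_neg_of_convexOn {g : E → ℝ} (hg : ConvexOn ℝ s g) {x y : E}
    (hy : y ∈ s) (hy' : -y ∈ s) (hx : x ∈ segment ℝ (-y) y) :
    g x + g (-x) ≤ g y + g (-y) := by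
  obtain ⟨a, b, ha, hb, hab, rfl⟩ := hx
  have hpos := hg.2 hy' hy ha hb hab
  have hneg := hg.2 hy hy' ha hb hab
  rw [show -(a • -y + b • y) = a • y + b • -y by module]
  simp only [smul_eq_mul] at hpos hneg
  linear_combination hpos + hneg + (g y + g (-y)) * hab

end Convexity

theorem integral_le_integral_of_add_neg_le {f g : ℝ → ℝ} {b : ℝ} (hb : 0 ≤ b)
    (hf : IntervalIntegrable f volume (-b) b) (hg : IntervalIntegrable g volume (-b) b)
    (h : ∀ t ∈ Set.Ioo (-b) b, f t + f (-t) ≤ g t + g (-t)) :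
    ∫ t in -b..b, f t ≤ ∫ t in -b..b, g t := by
  have integrable_neg {u : ℝ → ℝ} (hu : IntervalIntegrable u volume (-b) b) :
      IntervalIntegrable (fun t => u (-t)) volume (-b) b := by
    simpa only [neg_neg] using ((IntervalIntegrable.iff_comp_neg (by simp)).1 hu).symm
  have integral_symm {u : ℝ → ℝ} (hu : IntervalIntegrable u volume (-b) b) :
      ∫ t in -b..b, (u t + u (-t)) = 2 * ∫ t in -b..b, u t := by
    rw [integral_add hu (integrable_neg hu), integral_comp_neg, neg_neg, two_mul]
  have hle := integral_mono_on_of_le_Ioo (neg_le_self hb) (hf.add (integrable_neg hf))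
    (hg.add (integrable_neg hg)) h
  rw [integral_symm hf, integral_symm hg] at hle
  linarith

theorem integral_pow_mul_one_sub_pow (m n : ℕ) :
    ∫ x in (0 : ℝ)..1, x ^ m * (1 - x) ^ n =
      (m.factorial * n.factorial : ℝ) / (m + n + 1).factorial := by
  have hbeta : Complex.betaIntegral (m + 1) (n + 1) =
      ((∫ x in (0 : ℝ)..1, x ^ m * (1 - x) ^ n : ℝ) : ℂ) := by
    rw [Complex.betaIntegral, ← intervalIntegral.integral_ofReal]
    simp
  have hre (j : ℕ) : 0 < ((j : ℂ) + 1).re := by simpa using j.cast_add_one_pos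
  have hgamma := Complex.betaIntegral_eq_Gamma_mul_div _ _ (hre m) (hre n)
  rw [hbeta, show (m : ℂ) + 1 + (n + 1) = ((m + n + 1 : ℕ) : ℂ) + 1 by push_cast; ring] at hgamma
  simp only [Complex.Gamma_nat_eq_factorial] at hgamma
  apply Complex.ofReal_injective
  simpa using hgamma

theorem mul_pow_add_div_pow_mul_pow {x y : ℝ} (hx : x ≠ 0) (hy : y ≠ 0) (k l : ℕ) :
    (x * y) ^ (k + l) / (x ^ l * y ^ k) = x ^ k * y ^ l := by
  rw [div_eq_iff (by positivity), mul_pow]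
  ring

/-- The integrand of `Jfun d D a`, up to a constant factor, in the coordinate `t ∈ [-1, 1]` given by
`w = (1 + r * t) / 2`; here `r = √(1 - 4 * a)`, `k = d - 1` and `l = D - d - 1`. -/
def rescaledIntegrand (k l : ℕ) (r t : ℝ) : ℝ :=
  (1 - t ^ 2) ^ (k + l) / ((1 + r * t) ^ l * (1 - r * t) ^ k)

section RescaledIntegrand

variable (k l : ℕ) {r r' t : ℝ}

theorem rescaledIntegrand_nonneg (hr : r ∈ Set.Icc 0 1) (ht : t ∈ Set.Icc (-1) 1) :
    0 ≤ rescaledIntegrand k l r t := by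
  have hrt : |r * t| ≤ 1 := by
    rw [abs_mul]
    exact mul_le_one₀ (abs_le.2 ⟨by linarith [hr.1], hr.2⟩) (abs_nonneg t) (abs_le.2 ht)
  have hsq : 0 ≤ 1 - t ^ 2 := sub_nonneg.2 ((sq_le_one_iff_abs_le_one t).2 (abs_le.2 ht))
  have hadd : 0 ≤ 1 + r * t := by linarith [neg_le_of_abs_le hrt]
  have hsub : 0 ≤ 1 - r * t := by linarith [le_of_abs_le hrt]
  unfold rescaledIntegrand
  positivity

theorem rescaledIntegrand_add_neg_le (hr : 0 ≤ r) (hrr' : r ≤ r') (hr' : r' ≤ 1)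
    (ht : t ∈ Set.Ioo (-1) 1) :
    rescaledIntegrand k l r t + rescaledIntegrand k l r (-t) ≤
      rescaledIntegrand k l r' t + rescaledIntegrand k l r' (-t) := by
  have hconv : ConvexOn ℝ (Set.Ioo (-1) 1) fun x : ℝ => ((1 + x) ^ l * (1 - x) ^ k)⁻¹ :=
    convexOn_inv_pow_mul_pow
      ((concaveOn_const 1 (convex_Ioo _ _)).add (concaveOn_id (convex_Ioo _ _)))
      ((concaveOn_const 1 (convex_Ioo _ _)).sub (convexOn_id (convex_Ioo _ _)))
      (fun x hx => neg_lt_iff_pos_add'.1 hx.1) (fun x hx => sub_pos.2 hx.2) l k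
  have hmem : r' * t ∈ Set.Ioo (-1) 1 := by
    rw [Set.mem_Ioo, ← abs_lt, abs_mul, abs_of_nonneg (hr.trans hrr')]
    exact (mul_le_of_le_one_left (abs_nonneg t) hr').trans_lt (abs_lt.2 ht)
  have hseg : r * t ∈ segment ℝ (-(r' * t)) (r' * t) := by
    rw [segment_eq_uIcc, Set.mem_uIcc]
    rcases le_total 0 t with h | h
    · left; constructor <;> nlinarith
    · right; constructor <;> nlinarith
  have hsymm := add_neg_le_add_neg_of_convexOn hconv hmem
    ⟨neg_lt_neg hmem.2, by linarith [hmem.1]⟩ hseg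
  have hsq : 0 ≤ (1 - t ^ 2) ^ (k + l) :=
    pow_nonneg (sub_nonneg.2 ((sq_lt_one_iff_abs_lt_one t).2 (abs_lt.2 ht)).le) _
  simp only [rescaledIntegrand, div_eq_mul_inv, neg_sq, mul_neg, ← mul_add]
  exact mul_le_mul_of_nonneg_left hsymm hsq

theorem rescaledIntegrand_one (ht : t ∈ Set.Ioo (-1) 1) :
    rescaledIntegrand k l 1 t = (1 + t) ^ k * (1 - t) ^ l := by
  have hadd : 1 + t ≠ 0 := (neg_lt_iff_pos_add'.1 ht.1).ne'
  have hsub : 1 - t ≠ 0 := (sub_pos.2 ht.2).ne'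
  rw [rescaledIntegrand, one_mul, show 1 - t ^ 2 = (1 + t) * (1 - t) by ring,
    mul_pow_add_div_pow_mul_pow hadd hsub]

theorem intervalIntegrable_rescaledIntegrand_one :
    IntervalIntegrable (rescaledIntegrand k l 1) volume (-1) 1 := by
  have hcont : Continuous fun t : ℝ => (1 + t) ^ k * (1 - t) ^ l := by fun_prop
  refine (hcont.intervalIntegrable _ _).congr_uIoo fun t ht => ?_
  rw [Set.uIoo_of_le (by norm_num)] at ht
  exact (rescaledIntegrand_one k l ht).symm

theorem intervalIntegrable_rescaledIntegrand (hr : r ∈ Set.Icc 0 1) :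
    IntervalIntegrable (rescaledIntegrand k l r) volume (-1) 1 := by
  rcases hr.2.eq_or_lt with rfl | hr1
  · exact intervalIntegrable_rescaledIntegrand_one k l
  · refine ContinuousOn.intervalIntegrable_of_Icc (by norm_num) ?_
    have hadd (t : ℝ) (ht : t ∈ Set.Icc (-1) 1) : 1 + r * t ≠ 0 := by nlinarith [hr.1, ht.1]
    have hsub (t : ℝ) (ht : t ∈ Set.Icc (-1) 1) : 1 - r * t ≠ 0 := by nlinarith [hr.1, ht.2]
    unfold rescaledIntegrand
    exact ContinuousOn.div (by fun_prop) (by fun_prop) fun t ht =>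
      mul_ne_zero (pow_ne_zero _ (hadd t ht)) (pow_ne_zero _ (hsub t ht))

theorem monotoneOn_integral_rescaledIntegrand :
    MonotoneOn (fun r => ∫ t in (-1 : ℝ)..1, rescaledIntegrand k l r t) (Set.Icc 0 1) :=
  fun _ hr _ hr' hrr' => integral_le_integral_of_add_neg_le zero_le_one
    (intervalIntegrable_rescaledIntegrand k l hr) (intervalIntegrable_rescaledIntegrand k l hr')
    fun _ ht => rescaledIntegrand_add_neg_le k l hr.1 hrr' hr'.2 ht

theorem integral_eq_mul_integral_rescaledIntegrand {a : ℝ} (hr : r ^ 2 = 1 - 4 * a) :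
    ∫ x in (1 - r) / 2..(1 + r) / 2, (x * (1 - x) - a) ^ (k + l) / (x ^ l * (1 - x) ^ k) =
      r ^ (2 * (k + l) + 1) / 2 ^ (k + l + 1) *
        ∫ t in (-1 : ℝ)..1, rescaledIntegrand k l r t := by
  have hsubst := smul_integral_comp_mul_add (a := -1) (b := 1)
    (fun x : ℝ => (x * (1 - x) - a) ^ (k + l) / (x ^ l * (1 - x) ^ k)) (r / 2) (1 / 2)
  have hpoint (t : ℝ) : ((r / 2 * t + 1 / 2) * (1 - (r / 2 * t + 1 / 2)) - a) ^ (k + l) /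
      ((r / 2 * t + 1 / 2) ^ l * (1 - (r / 2 * t + 1 / 2)) ^ k) =
        r ^ (2 * (k + l)) / 2 ^ (k + l) * rescaledIntegrand k l r t := by
    rw [show (r / 2 * t + 1 / 2) * (1 - (r / 2 * t + 1 / 2)) - a = r ^ 2 / 2 * (1 - t ^ 2) / 2 by
        linear_combination -hr / 4,
      show r / 2 * t + 1 / 2 = (1 + r * t) / 2 by ring,
      show 1 - (1 + r * t) / 2 = (1 - r * t) / 2 by ring,
      div_pow, div_pow, div_pow, div_mul_div_comm, ← pow_add, add_comm l k,
      div_div_div_cancel_right₀ (by positivity), mul_pow, div_pow, ← pow_mul,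
      mul_div_assoc, rescaledIntegrand]
  simp only [hpoint, intervalIntegral.integral_const_mul, smul_eq_mul] at hsubst
  rw [show (1 - r) / 2 = r / 2 * -1 + 1 / 2 by ring,
    show (1 + r) / 2 = r / 2 * 1 + 1 / 2 by ring, ← hsubst]
  ring

end RescaledIntegrand

theorem rpow_natCast_add_half_eq_sqrt_pow {q : ℝ} (hq : 0 ≤ q) (n : ℕ) :
    q ^ ((n : ℝ) + 1 / 2) = √q ^ (2 * n + 1) := by
  rw [Real.sqrt_eq_rpow, ← Real.rpow_mul_natCast hq]
  congr 1
  push_cast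
  ring

section Jfun

variable {d D : ℕ} {a : ℝ}

theorem Jfun_eq_rpow_mul (hd : 0 < d) (hD : d < D) (ha : a ≤ 1 / 4) :
    Jfun d D a = (1 - 4 * a) ^ ((D : ℝ) - 3 / 2) *
      ((D - 1).factorial / ((d - 1).factorial * (D - d - 1).factorial) / 2 ^ (D - 1) *
        ∫ t in (-1 : ℝ)..1, rescaledIntegrand (d - 1) (D - d - 1) √(1 - 4 * a) t) := by
  obtain ⟨k, rfl⟩ : ∃ k, d = k + 1 := ⟨d - 1, by omega⟩
  obtain ⟨l, rfl⟩ : ∃ l, D = k + l + 2 := ⟨D - k - 2, by omega⟩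
  have hq : 0 ≤ 1 - 4 * a := by linarith
  have hsqrt : √(1 / 4 - a) = √(1 - 4 * a) / 2 := by
    rw [show 1 / 4 - a = (1 - 4 * a) / 2 ^ 2 by ring, Real.sqrt_div hq, Real.sqrt_sq two_pos.le]
  have hexp : ((k + l + 2 : ℕ) : ℝ) - 3 / 2 = ((k + l : ℕ) : ℝ) + 1 / 2 := by
    push_cast
    ring
  rw [hexp, rpow_natCast_add_half_eq_sqrt_pow hq, Jfun, hsqrt, ← sub_div, ← add_div,
    show k + l + 2 - 2 = k + l by omega, show k + l + 2 - (k + 1) - 1 = l by omega,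
    show k + 1 - 1 = k by omega, show k + l + 2 - 1 = k + l + 1 by omega,
    integral_eq_mul_integral_rescaledIntegrand k l (Real.sq_sqrt hq)]
  ring

theorem Jfun_zero (hd : 0 < d) (hD : d < D) : Jfun d D 0 = 1 := by
  obtain ⟨k, rfl⟩ : ∃ k, d = k + 1 := ⟨d - 1, by omega⟩
  obtain ⟨l, rfl⟩ : ∃ l, D = k + l + 2 := ⟨D - k - 2, by omega⟩
  have hcancel : Set.EqOn (fun x : ℝ => (x * (1 - x) - 0) ^ (k + l) / (x ^ l * (1 - x) ^ k))
      (fun x => x ^ k * (1 - x) ^ l) (Set.Ioo 0 1) := fun x hx => by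
    simp only [sub_zero]
    exact mul_pow_add_div_pow_mul_pow hx.1.ne' (sub_pos.2 hx.2).ne' k l
  have hsqrt : √(1 / 4 - 0) = 1 / 2 := by
    rw [show (1 / 4 - 0 : ℝ) = (1 / 2) ^ 2 by norm_num, Real.sqrt_sq (by norm_num)]
  rw [Jfun, hsqrt, sub_self, add_halves,
    show k + l + 2 - 2 = k + l by omega, show k + l + 2 - (k + 1) - 1 = l by omega,
    show k + 1 - 1 = k by omega, show k + l + 2 - 1 = k + l + 1 by omega,
    integral_congr_Ioo_of_le zero_le_one hcancel, integral_pow_mul_one_sub_pow]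
  field_simp

theorem sqrt_one_sub_four_mul_mem_Icc (ha : 0 ≤ a) : √(1 - 4 * a) ∈ Set.Icc 0 1 :=
  ⟨Real.sqrt_nonneg _, Real.sqrt_le_one.2 (by linarith)⟩

theorem Jfun_nonneg (hd : 0 < d) (hD : d < D) (ha0 : 0 ≤ a) (ha1 : a ≤ 1 / 4) :
    0 ≤ Jfun d D a := by
  rw [Jfun_eq_rpow_mul hd hD ha1]
  have hint : 0 ≤ ∫ t in (-1 : ℝ)..1, rescaledIntegrand (d - 1) (D - d - 1) √(1 - 4 * a) t :=
    integral_nonneg (by norm_num) fun t ht =>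
      rescaledIntegrand_nonneg _ _ (sqrt_one_sub_four_mul_mem_Icc ha0) ht
  have hq : 0 ≤ 1 - 4 * a := by linarith
  positivity

theorem Jfun_le_rpow (hd : 0 < d) (hD : d < D) (ha0 : 0 ≤ a) (ha1 : a ≤ 1 / 4) :
    Jfun d D a ≤ (1 - 4 * a) ^ ((D : ℝ) - 3 / 2) := by
  have hmono := monotoneOn_integral_rescaledIntegrand (d - 1) (D - d - 1)
    (sqrt_one_sub_four_mul_mem_Icc ha0) (Set.right_mem_Icc.2 zero_le_one)
    (sqrt_one_sub_four_mul_mem_Icc ha0).2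
  have hnorm := Jfun_zero hd hD
  rw [Jfun_eq_rpow_mul hd hD (by norm_num), mul_zero, sub_zero, Real.one_rpow, one_mul,
    Real.sqrt_one] at hnorm
  rw [Jfun_eq_rpow_mul hd hD ha1]
  refine mul_le_of_le_one_right (Real.rpow_nonneg (by linarith) _) ?_
  exact (mul_le_mul_of_nonneg_left hmono (by positivity)).trans_eq hnorm

end Jfun

theorem one_sub_rpow_le_exp_neg_mul {x y : ℝ} (hx : x ≤ 1) (hy : 0 ≤ y) :
    (1 - x) ^ y ≤ Real.exp (-(x * y)) := by
  rw [← neg_mul, Real.exp_mul]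
  exact Real.rpow_le_rpow (sub_nonneg.2 hx) (Real.one_sub_le_exp_neg x) hy

theorem stmt18_general (d D : ℕ) (hd : 0 < d) (hD : d < D) (a : ℝ) (ha0 : 0 ≤ a)
    (ha1 : a ≤ 1 / 4) :
    0 ≤ Jfun d D a ∧
      Jfun d D a ≤ (1 - 4 * a) ^ ((D : ℝ) - 3 / 2) ∧
      (1 - 4 * a) ^ ((D : ℝ) - 3 / 2) ≤ Real.exp (-(4 * a * ((D : ℝ) - 3 / 2))) := by
  have hD2 : (2 : ℝ) ≤ D := by exact_mod_cast (show 2 ≤ D by omega)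
  exact ⟨Jfun_nonneg hd hD ha0 ha1, Jfun_le_rpow hd hD ha0 ha1,
    one_sub_rpow_le_exp_neg_mul (by linarith) (by linarith)⟩

theorem stmt18 (d D : ℕ) (hd1 : 1 < d) (hd2 : d + 1 < D) (hD : 2 * d + 2 < D)
    (a : ℝ) (ha0 : 0 ≤ a) (ha1 : a < 1 / 4) :
    0 ≤ Jfun d D a ∧
      Jfun d D a ≤ (1 - 4 * a) ^ ((D : ℝ) - 3 / 2) ∧
      (1 - 4 * a) ^ ((D : ℝ) - 3 / 2) ≤ Real.exp (-(4 * a * ((D : ℝ) - 3 / 2))) :=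
  stmt18_general d D (by omega) (by omega) a ha0 ha1.le
end
end

section
/- Let d, D be integers with 3 < d, D > 2d + 2 and (log D)/D < 1/5. Let φ_1,…,φ_D be any orthonormal basis of ℂ^D and let P be an orthogonal projection of rank d onto a coordinate subspace. Then ∫_{U(D)} max_{1 ≤ α ≠ β ≤ D} |⟨φ_α, U P U⁻¹ φ_β⟩|² dμ(U) < (log D)/D, where μ is the Haar probability measure on U(D). -/
open MeasureTheory Filter

noncomputable section

/-!
In an orthonormal basis the off-diagonal entries in a row of an orthogonal projection `Q` have
square sum `q - q ^ 2 ≤ 1 / 4`, where `q` is the diagonal entry. Left translation by a unitary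
that fixes the `α`-th basis vector and whose `β`-th row is flat replaces the entry `(α, β)` by a
combination of the entries `Q α j`, `j ≠ α`, with coefficients of modulus `(D - 1) ^ (-1 / 2)`. By
left invariance the entries may moreover be multiplied by independent uniform fourth roots of
unity, and a Khintchine-type inequality bounds the exponential moment of the squared modulus at
`c = 3 * (D - 1)` by `(1 - c / (4 * (D - 1)))⁻¹ = 4`. The exponential-moment bound for the maximum
of the `D * (D - 1)` entries then gives `log (4 * D * (D - 1)) / (3 * (D - 1)) < log D / D`.
-/

open Real ProbabilityTheory
open scoped BigOperators ComplexConjugate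

lemma cosh_add_cosh_le (u v : ℝ) : cosh u + cosh v ≤ 2 * exp ((u ^ 2 + v ^ 2) / 4) := by
  have sum_to_product : cosh u + cosh v = 2 * (cosh ((u + v) / 2) * cosh ((u - v) / 2)) := by
    have hu := cosh_add ((u + v) / 2) ((u - v) / 2)
    have hv := cosh_sub ((u + v) / 2) ((u - v) / 2)
    ring_nf at hu hv ⊢
    linarith
  calc cosh u + cosh v
      ≤ 2 * (exp (((u + v) / 2) ^ 2 / 2) * exp (((u - v) / 2) ^ 2 / 2)) := by
        rw [sum_to_product]
        gcongr <;> exact cosh_le_exp_half_sq _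
    _ = 2 * exp ((u ^ 2 + v ^ 2) / 4) := by rw [← exp_add]; ring_nf

lemma expect_exp_mul_norm_add_I_pow_mul_sq (c : ℝ) (z a : ℂ) :
    𝔼 k : Fin 4, exp (c * ‖z + Complex.I ^ (k : ℕ) * a‖ ^ 2) =
      exp (c * (‖z‖ ^ 2 + ‖a‖ ^ 2)) *
        ((cosh (2 * c * (z * conj a).re) + cosh (2 * c * (z * conj a).im)) / 2) := by
  have norm_sq (k : Fin 4) : ‖z + Complex.I ^ (k : ℕ) * a‖ ^ 2 =
      ‖z‖ ^ 2 + ‖a‖ ^ 2 + 2 * (z * conj a * (-Complex.I) ^ (k : ℕ)).re := by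
    simp only [Complex.sq_norm, Complex.normSq_add, map_mul, map_pow, Complex.normSq_I, one_pow,
      one_mul, Complex.conj_I, mul_right_comm, mul_assoc]
  simp only [norm_sq, mul_add c, exp_add, ← Finset.mul_expect]
  congr 1
  generalize z * conj a = w
  rw [Fintype.expect_eq_sum_div_card, Fin.sum_univ_four, cosh_eq, cosh_eq]
  simp only [Fin.coe_ofNat_eq_mod, Nat.zero_mod, Nat.one_mod, Nat.reduceMod, Nat.mod_succ, pow_zero,
    pow_succ, mul_one, one_mul, mul_zero, zero_sub, mul_neg, neg_mul, neg_neg, Complex.neg_re,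
    Complex.mul_re, Complex.I_re, Complex.I_im, Complex.I_mul_I, Fintype.card_fin, Nat.cast_ofNat]
  ring_nf

lemma exp_add_sq_mul_le {c b x : ℝ} (hc : 0 ≤ c) (hb : 0 ≤ b) (hx : 0 ≤ x) (h : c * b < 1) :
    exp (c * (x + b) + c ^ 2 * (x * b)) ≤ (1 - c * b)⁻¹ * exp (c / (1 - c * b) * x) := by
  have hpos : 0 < 1 - c * b := sub_pos.2 h
  have exp_le : exp (c * b) ≤ (1 - c * b)⁻¹ :=
    (exp_bound_div_one_sub_of_interval (mul_nonneg hc hb) h).trans_eq (one_div _)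
  have coeff_le : c + c ^ 2 * b ≤ c / (1 - c * b) := by
    rw [le_div_iff₀ hpos]
    linarith [mul_nonneg hc (sq_nonneg (c * b))]
  calc exp (c * (x + b) + c ^ 2 * (x * b)) = exp (c * b) * exp ((c + c ^ 2 * b) * x) := by
        rw [← exp_add]; ring_nf
    _ ≤ (1 - c * b)⁻¹ * exp (c / (1 - c * b) * x) := by gcongr

lemma expect_exp_mul_norm_add_I_pow_mul_sq_le {c : ℝ} (hc : 0 ≤ c) (z : ℂ) {a : ℂ}
    (h : c * ‖a‖ ^ 2 < 1) :
    𝔼 k : Fin 4, exp (c * ‖z + Complex.I ^ (k : ℕ) * a‖ ^ 2) ≤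
      (1 - c * ‖a‖ ^ 2)⁻¹ * exp (c / (1 - c * ‖a‖ ^ 2) * ‖z‖ ^ 2) := by
  have re_sq_add_im_sq : (z * conj a).re ^ 2 + (z * conj a).im ^ 2 = ‖z‖ ^ 2 * ‖a‖ ^ 2 := by
    rw [← mul_pow, ← Complex.norm_conj a, ← norm_mul, Complex.sq_norm, Complex.normSq_apply]
    ring
  calc 𝔼 k : Fin 4, exp (c * ‖z + Complex.I ^ (k : ℕ) * a‖ ^ 2)
      ≤ exp (c * (‖z‖ ^ 2 + ‖a‖ ^ 2)) * exp (c ^ 2 * (‖z‖ ^ 2 * ‖a‖ ^ 2)) := by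
        rw [expect_exp_mul_norm_add_I_pow_mul_sq]
        gcongr
        refine (div_le_iff₀' two_pos).2 ((cosh_add_cosh_le _ _).trans_eq ?_)
        rw [← re_sq_add_im_sq]
        ring_nf
    _ ≤ _ := by
        rw [← exp_add]
        exact exp_add_sq_mul_le hc (sq_nonneg _) (sq_nonneg _) h

lemma expect_fin_succ_pi {n : ℕ} {κ : Type*} [Fintype κ] (F : (Fin (n + 1) → κ) → ℝ) :
    𝔼 ε, F ε = 𝔼 ε : Fin n → κ, 𝔼 k, F (Fin.cons k ε) := by
  rw [Finset.expect_comm, ← Finset.expect_product', Finset.univ_product_univ]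
  exact (Fintype.expect_equiv (Fin.consEquiv fun _ => κ) _ _ fun _ => rfl).symm

theorem expect_exp_mul_norm_add_sum_I_pow_mul_sq_le {n : ℕ} {c : ℝ} (hc : 0 ≤ c) (z : ℂ)
    {a : Fin n → ℂ} (h : c * ∑ j, ‖a j‖ ^ 2 < 1) :
    𝔼 ε : Fin n → Fin 4, exp (c * ‖z + ∑ j, Complex.I ^ (ε j : ℕ) * a j‖ ^ 2) ≤
      (1 - c * ∑ j, ‖a j‖ ^ 2)⁻¹ * exp (c / (1 - c * ∑ j, ‖a j‖ ^ 2) * ‖z‖ ^ 2) := by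
  induction n generalizing c with
  | zero => simp
  | succ n ih =>
    set b := ‖a 0‖ ^ 2
    set t := ∑ j : Fin n, ‖a j.succ‖ ^ 2
    have sum_eq : ∑ j, ‖a j‖ ^ 2 = b + t := Fin.sum_univ_succ _
    rw [sum_eq] at h ⊢
    have hb : c * b < 1 := by nlinarith [show 0 ≤ t by positivity]
    have hpos : 0 < 1 - c * b := sub_pos.2 hb
    have ht : c / (1 - c * b) * t < 1 := by
      rw [div_mul_eq_mul_div, div_lt_one hpos]; linarith
    have one_sub_mul : (1 - c * b) * (1 - c / (1 - c * b) * t) = 1 - c * (b + t) := by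
      field_simp; ring
    calc 𝔼 ε : Fin (n + 1) → Fin 4, exp (c * ‖z + ∑ j, Complex.I ^ (ε j : ℕ) * a j‖ ^ 2)
        = 𝔼 ε : Fin n → Fin 4, 𝔼 k : Fin 4, exp (c * ‖(z + ∑ j, Complex.I ^ (ε j : ℕ) * a j.succ) +
            Complex.I ^ (k : ℕ) * a 0‖ ^ 2) := by
          rw [expect_fin_succ_pi]
          simp only [Fin.sum_univ_succ, Fin.cons_zero, Fin.cons_succ, add_assoc,
            add_comm (Complex.I ^ _ * a 0)]
      _ ≤ 𝔼 ε : Fin n → Fin 4, (1 - c * b)⁻¹ *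
            exp (c / (1 - c * b) * ‖z + ∑ j, Complex.I ^ (ε j : ℕ) * a j.succ‖ ^ 2) :=
          Finset.expect_le_expect fun ε _ => expect_exp_mul_norm_add_I_pow_mul_sq_le hc _ hb
      _ ≤ (1 - c * b)⁻¹ * ((1 - c / (1 - c * b) * t)⁻¹ *
            exp (c / (1 - c * b) / (1 - c / (1 - c * b) * t) * ‖z‖ ^ 2)) := by
          rw [← Finset.mul_expect]
          gcongr
          exact ih (div_nonneg hc hpos.le) ht
      _ = _ := by
          rw [div_div, one_sub_mul, ← mul_assoc, ← mul_inv, one_sub_mul]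

lemma integral_iSup_le_log_div {Ω ι : Type*} [MeasurableSpace Ω] {μ : Measure Ω}
    [IsProbabilityMeasure μ] [Fintype ι] [Nonempty ι] {X : ι → Ω → ℝ} {c K : ℝ} (hc : 0 < c)
    (hX : ∀ i ω, 0 ≤ X i ω) (hint : ∀ i, Integrable (fun ω => exp (c * X i ω)) μ)
    (hK : ∀ i, mgf (X i) μ c ≤ K) :
    ∫ ω, ⨆ i, X i ω ∂μ ≤ log (Fintype.card ι * K) / c := by
  have hK_pos : 0 < K := (mgf_pos (hint (Classical.arbitrary ι))).trans_le (hK _)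
  set L : ℝ := Fintype.card ι * K
  have hL : 0 < L := by positivity
  have hsum : Integrable (fun ω => ∑ i, exp (c * X i ω)) μ :=
    integrable_finsetSum _ fun i _ => hint i
  -- Bounding `log` by its tangent at `L` replaces Jensen's inequality.
  have pointwise (ω : Ω) : ⨆ i, X i ω ≤ ((∑ i, exp (c * X i ω)) / L + (log L - 1)) / c := by
    refine ciSup_le fun i => (le_div_iff₀ hc).2 ?_
    have tangent := add_one_le_exp (c * X i ω - log L)
    rw [exp_sub, exp_log hL] at tangent
    have single : exp (c * X i ω) / L ≤ (∑ i, exp (c * X i ω)) / L := by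
      gcongr
      exact Finset.single_le_sum (f := fun i => exp (c * X i ω)) (fun _ _ => (exp_pos _).le)
        (Finset.mem_univ i)
    linarith
  have hsum_le : ∫ ω, ∑ i, exp (c * X i ω) ∂μ ≤ L := by
    rw [integral_finsetSum _ fun i _ => hint i]
    exact (Finset.sum_le_card_nsmul _ _ K fun i _ => hK i).trans_eq (by simp [L])
  calc ∫ ω, ⨆ i, X i ω ∂μ
      ≤ ∫ ω, ((∑ i, exp (c * X i ω)) / L + (log L - 1)) / c ∂μ :=
        integral_mono_of_nonneg (.of_forall fun ω => Real.iSup_nonneg fun i => hX i ω)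
          (((hsum.div_const L).add (integrable_const _)).div_const c) (.of_forall pointwise)
    _ = ((∫ ω, ∑ i, exp (c * X i ω) ∂μ) / L + (log L - 1)) / c := by
        rw [integral_div, integral_add (hsum.div_const L) (integrable_const _), integral_div,
          integral_const, probReal_univ, one_smul]
    _ ≤ (1 + (log L - 1)) / c := by gcongr; exact (div_le_one hL).2 hsum_le
    _ = log L / c := by ring

lemma iSup_iSup_iSup_prop_eq_iSup_subtype {ι κ : Type*} [Finite ι] [Finite κ] {r : ι → κ → Prop}
    {f : ι → κ → ℝ} (hf : ∀ i j, 0 ≤ f i j) :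
    ⨆ i, ⨆ j, ⨆ _ : r i j, f i j = ⨆ p : {p : ι × κ // r p.1 p.2}, f p.1.1 p.1.2 := by
  have hnonneg : 0 ≤ ⨆ p : {p : ι × κ // r p.1 p.2}, f p.1.1 p.1.2 :=
    Real.iSup_nonneg fun p => hf _ _
  refine le_antisymm (Real.iSup_le (fun i => Real.iSup_le (fun j => Real.iSup_le (fun h =>
    le_ciSup (f := fun p : {p : ι × κ // r p.1 p.2} => f p.1.1 p.1.2)
      (Set.finite_range _).bddAbove ⟨(i, j), h⟩) hnonneg) hnonneg) hnonneg) ?_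
  refine Real.iSup_le (fun ⟨⟨i, j⟩, h⟩ => ?_) (Real.iSup_nonneg fun i => Real.iSup_nonneg fun j =>
    Real.iSup_nonneg fun _ => hf i j)
  exact le_ciSup_of_le (Set.finite_range _).bddAbove i <|
    le_ciSup_of_le (Set.finite_range _).bddAbove j <|
      le_ciSup_of_le (Set.finite_range _).bddAbove h le_rfl

lemma integral_eq_integral_expect_mul_left {G κ : Type*} [Group G] [MeasurableSpace G]
    [MeasurableMul G] [Fintype κ] [Nonempty κ] {μ : Measure G} [μ.IsMulLeftInvariant]
    {f : G → ℝ} (hf : Integrable f μ) (g : κ → G) :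
    ∫ x, f x ∂μ = ∫ x, 𝔼 k, f (g k * x) ∂μ := by
  simp only [Fintype.expect_eq_sum_div_card]
  rw [integral_div, integral_finsetSum _ fun k _ => hf.comp_mul_left (g k)]
  simp [integral_mul_left_eq_self f]

lemma log_mul_sub_one_mul_four_div_lt {x : ℝ} (hx : 8 ≤ x) :
    log (x * (x - 1) * 4) / (3 * (x - 1)) < log x / x := by
  have log_eight_le : 3 * log 2 ≤ log x := by
    rw [← Nat.cast_ofNat (n := 3), ← log_pow]
    exact log_le_log (by norm_num) (by linarith)
  have log_four : log 4 = 2 * log 2 := by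
    rw [show (4 : ℝ) = 2 ^ 2 by norm_num, log_pow, Nat.cast_ofNat]
  have log_sub_one_mul_le : log (x - 1) * x ≤ log x * x - 1 := by
    have tangent := log_le_sub_one_of_pos (x := (x - 1) / x) (by bound)
    rw [log_div (by linarith) (by linarith), sub_div, div_self (by linarith)] at tangent
    calc log (x - 1) * x ≤ (log x - 1 / x) * x := by gcongr; linarith
      _ = log x * x - 1 := by field_simp
  rw [log_mul (by nlinarith) (by norm_num), log_mul (by linarith) (by linarith), log_four,
    div_lt_div_iff₀ (by linarith) (by linarith)]
  nlinarith [log_two_lt_d9, log_two_gt_d9]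

section Matrix

variable {n 𝕜 : Type*} [Fintype n] [DecidableEq n] [RCLike 𝕜]

lemma sum_erase_norm_sq_row_le_of_isStarProjection {Q : Matrix n n 𝕜} (hQ : IsStarProjection Q)
    (i : n) : ∑ j ∈ Finset.univ.erase i, ‖Q i j‖ ^ 2 ≤ 1 / 4 := by
  set q : ℝ := ∑ j, ‖Q i j‖ ^ 2 with hq
  have diag_eq : Q i i = (q : 𝕜) := by
    calc Q i i = ∑ j, Q i j * Q j i := by rw [← Matrix.mul_apply, hQ.isIdempotentElem.eq]
      _ = ∑ j, ((‖Q i j‖ ^ 2 : ℝ) : 𝕜) := by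
        refine Finset.sum_congr rfl fun j _ => ?_
        have symm : Q j i = conj (Q i j) := (congr_fun₂ hQ.isSelfAdjoint.star_eq j i).symm
        rw [symm, RCLike.mul_conj, RCLike.ofReal_pow]
      _ = (q : 𝕜) := by rw [hq, RCLike.ofReal_sum]
  have row_split := Finset.add_sum_erase _ (fun j => ‖Q i j‖ ^ 2) (Finset.mem_univ i)
  rw [diag_eq, RCLike.norm_ofReal, sq_abs, ← hq] at row_split
  linarith [sq_nonneg (q - 1 / 2)]

instance compactSpace_unitaryGroup : CompactSpace (Matrix.unitaryGroup n 𝕜) := by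
  refine isCompact_iff_compactSpace.1 (IsCompact.of_isClosed_subset
    (isCompact_univ_pi fun _ : n => isCompact_univ_pi fun _ : n =>
      isCompact_closedBall (0 : 𝕜) 1) isClosed_unitary fun U hU => ?_)
  exact fun i _ j _ => mem_closedBall_zero_iff.2 (entry_norm_bound_of_unitary hU i j)

lemma exists_unitaryGroup_star_row_eq {s : Set n} {v : n → EuclideanSpace 𝕜 n}
    (hv : Orthonormal 𝕜 (s.domRestrict v)) :
    ∃ V : Matrix.unitaryGroup n 𝕜, ∀ i ∈ s, ∀ j, V.1 i j = conj (v i j) := by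
  have finrank_eq : Module.finrank 𝕜 (EuclideanSpace 𝕜 n) = Fintype.card n :=
    finrank_euclideanSpace
  obtain ⟨b, hb⟩ := hv.exists_orthonormalBasis_extension_of_card_eq finrank_eq
  have mem_unitary := (EuclideanSpace.basisFun n 𝕜).toMatrix_orthonormalBasis_mem_unitary b
  refine ⟨⟨_, Unitary.star_mem mem_unitary⟩, fun i hi j => ?_⟩
  rw [← hb i hi]
  rfl

lemma exists_unitaryGroup_flat_row {i j : n} (hij : i ≠ j) :
    ∃ V : Matrix.unitaryGroup n 𝕜, V.1 i = Pi.single i 1 ∧ V.1 j i = 0 ∧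
      ∀ k, k ≠ i → ‖V.1 j k‖ ^ 2 = ((Fintype.card n : ℝ) - 1)⁻¹ := by
  have card_pos : 0 < (Fintype.card n : ℝ) - 1 := by
    have := Fintype.one_lt_card_iff.2 ⟨i, j, hij⟩
    rw [sub_pos]; exact_mod_cast this
  set r : ℝ := √((Fintype.card n : ℝ) - 1)⁻¹
  have hr_sq : r ^ 2 = ((Fintype.card n : ℝ) - 1)⁻¹ := sq_sqrt (inv_nonneg.2 card_pos.le)
  let flat : EuclideanSpace 𝕜 n := WithLp.toLp 2 fun l => if l = i then 0 else (r : 𝕜)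
  have norm_flat : ‖flat‖ = 1 := by
    rw [EuclideanSpace.norm_eq, sqrt_eq_one, ← Finset.add_sum_erase _ _ (Finset.mem_univ i)]
    have norm_sq_flat (l : n) (hl : l ∈ Finset.univ.erase i) :
        ‖flat l‖ ^ 2 = ((Fintype.card n : ℝ) - 1)⁻¹ := by
      simp [flat, Finset.ne_of_mem_erase hl, hr_sq]
    rw [Finset.sum_congr rfl norm_sq_flat]
    simp [flat, Fintype.card_pos_iff.2 ⟨i⟩, card_pos.ne']
  let v : n → EuclideanSpace 𝕜 n := fun k => if k = i then EuclideanSpace.single i 1 else flat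
  have hv : Orthonormal 𝕜 (({i, j} : Set n).domRestrict v) := by
    constructor
    · rintro ⟨k, rfl | rfl⟩
      · simp [v]
      · simp [v, hij.symm, norm_flat]
    · rintro ⟨k, rfl | rfl⟩ ⟨l, rfl | rfl⟩ hkl
      · exact absurd rfl hkl
      · simp [v, flat, hij.symm, EuclideanSpace.inner_single_left]
      · simp [v, flat, hij.symm, EuclideanSpace.inner_single_right]
      · exact absurd rfl hkl
  obtain ⟨V, hV⟩ := exists_unitaryGroup_star_row_eq hv
  refine ⟨V, funext fun k => ?_, ?_, fun k hk => ?_⟩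
  · simp [hV, v, Pi.single_apply, apply_ite]
  · simp [hV, v, flat, hij.symm]
  · simp [hV, v, flat, hij.symm, hk, hr_sq]

end Matrix

section RotProj

variable {D : ℕ}

lemma rotProj_mul (V U : UG D) (P : Matrix (Fin D) (Fin D) ℂ) :
    rotProj (V * U) P = V.1 * rotProj U P * star V.1 := by
  simp only [rotProj, mul_inv_rev, Submonoid.coe_mul, Matrix.mul_assoc]
  rfl

lemma isStarProjection_rotProj (U : UG D) {P : Matrix (Fin D) (Fin D) ℂ}
    (hP : IsStarProjection P) : IsStarProjection (rotProj U P) :=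
  hP.map (Unitary.conjStarAlgAut ℂ _ U)

lemma isStarProjection_coordProj (s : Finset (Fin D)) : IsStarProjection (coordProj D s) := by
  refine isStarProjection_iff'.2 ⟨?_, ?_⟩
  · simp [coordProj]
  · rw [coordProj, Matrix.star_eq_conjTranspose, Matrix.diagonal_conjTranspose]
    congr 1; ext i; simp [Pi.star_apply, apply_ite]

lemma continuous_rotProj_apply (P : Matrix (Fin D) (Fin D) ℂ) (α β : Fin D) :
    Continuous fun U : UG D => rotProj U P α β := by
  have : Continuous fun U : UG D => rotProj U P := by
    unfold rotProj
    fun_prop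
  exact this.matrix_elem α β

/-- The diagonal unitary with phases `ζ`; multiplying a Haar-distributed unitary by it on the left
randomizes the phases of the entries of `rotProj U P`. -/
def diagonalUnitary (ζ : Fin D → unitary ℂ) : UG D :=
  ⟨Matrix.diagonal fun j => (ζ j : ℂ), by
    rw [Matrix.mem_unitaryGroup_iff, Matrix.star_eq_conjTranspose, Matrix.diagonal_conjTranspose,
      Matrix.diagonal_mul_diagonal, ← Matrix.diagonal_one]
    exact congrArg Matrix.diagonal (funext fun j => Unitary.coe_mul_star_self (ζ j))⟩

lemma rotProj_diagonalUnitary_mul_apply (ζ : Fin D → unitary ℂ) (U : UG D)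
    (P : Matrix (Fin D) (Fin D) ℂ) (α β : Fin D) :
    rotProj (diagonalUnitary ζ * U) P α β = ζ α * rotProj U P α β * conj (ζ β : ℂ) := by
  rw [rotProj_mul, diagonalUnitary, Matrix.star_eq_conjTranspose, Matrix.diagonal_conjTranspose,
    Matrix.mul_diagonal, Matrix.diagonal_mul]
  rfl

lemma rotProj_mul_apply_of_row_eq_single {V : UG D} {α : Fin D} (hV : V.1 α = Pi.single α 1)
    (U : UG D) (P : Matrix (Fin D) (Fin D) ℂ) (β : Fin D) :
    rotProj (V * U) P α β = ∑ j, rotProj U P α j * conj (V.1 β j) := by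
  rw [rotProj_mul, Matrix.mul_apply]
  simp only [Matrix.mul_apply, hV, Pi.single_apply, ite_mul, one_mul, zero_mul, Finset.sum_ite_eq',
    Finset.mem_univ, if_true]
  rfl

lemma exists_dotc_mulVec_rotProj_eq {φ : Fin D → Fin D → ℂ}
    (hφ : ∀ α β, dotc (φ α) (φ β) = if α = β then 1 else 0) :
    ∃ V : UG D, ∀ (U : UG D) (P : Matrix (Fin D) (Fin D) ℂ) (α β : Fin D),
      dotc (φ α) ((rotProj U P).mulVec (φ β)) = rotProj (V * U) P α β := by
  have orthonormal : Orthonormal ℂ fun α => (WithLp.toLp 2 (φ α) : EuclideanSpace ℂ (Fin D)) := by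
    rw [orthonormal_iff_ite]
    intro α β
    rw [← hφ, EuclideanSpace.inner_toLp_toLp, dotProduct_comm]
    rfl
  obtain ⟨V, hV⟩ := exists_unitaryGroup_star_row_eq (s := Set.univ)
    (v := fun α => WithLp.toLp 2 (φ α)) (orthonormal.comp _ Subtype.val_injective)
  refine ⟨V, fun U P α β => ?_⟩
  rw [rotProj_mul, Matrix.mul_assoc, Matrix.mul_apply]
  refine Finset.sum_congr rfl fun i _ => ?_
  rw [Matrix.mul_apply, Matrix.mulVec, dotProduct]
  simp [hV, Matrix.star_apply]

lemma integral_exp_mul_norm_sum_rotProj_mul_sq_le {μ : Measure (UG D)} [μ.IsMulLeftInvariant]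
    [IsProbabilityMeasure μ] {P : Matrix (Fin D) (Fin D) ℂ} {α : Fin D} {w : Fin D → ℂ} {c R : ℝ}
    (hc : 0 ≤ c) (hR : ∀ U, ∑ j, ‖rotProj U P α j * w j‖ ^ 2 ≤ R) (hcR : c * R < 1) :
    ∫ U, exp (c * ‖∑ j, rotProj U P α j * w j‖ ^ 2) ∂μ ≤ (1 - c * R)⁻¹ := by
  obtain ⟨u, hu⟩ : ∃ u : unitary ℂ, (u : ℂ) = Complex.I :=
    ⟨⟨Complex.I, by simp [Unitary.mem_iff]⟩, rfl⟩
  have continuous_entry := continuous_rotProj_apply P α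
  have integrable_exp : Integrable (fun U => exp (c * ‖∑ j, rotProj U P α j * w j‖ ^ 2)) μ :=
    Continuous.integrable_of_hasCompactSupport (by fun_prop) (.of_compactSpace _)
  let g (ε : Fin D → Fin 4) : UG D := diagonalUnitary fun j => star (u ^ (ε j : ℕ))
  have norm_eq (ε : Fin D → Fin 4) (U : UG D) :
      ‖∑ j, rotProj (g ε * U) P α j * w j‖ =
        ‖0 + ∑ j, Complex.I ^ (ε j : ℕ) * (rotProj U P α j * w j)‖ := by
    have phases (j : Fin D) :
        rotProj (g ε * U) P α j * w j =
          (star (u ^ (ε α : ℕ)) : unitary ℂ) *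
            (Complex.I ^ (ε j : ℕ) * (rotProj U P α j * w j)) := by
      simp only [g, rotProj_diagonalUnitary_mul_apply, Unitary.coe_star, RCLike.star_def,
        Complex.conj_conj, SubmonoidClass.coe_pow, hu]
      ring
    rw [Finset.sum_congr rfl fun j _ => phases j, ← Finset.mul_sum, norm_mul,
      CStarRing.norm_coe_unitary, one_mul, zero_add]
  have expect_le (U : UG D) :
      𝔼 ε, exp (c * ‖∑ j, rotProj (g ε * U) P α j * w j‖ ^ 2) ≤ (1 - c * R)⁻¹ := by
    have hcR' : c * ∑ j, ‖rotProj U P α j * w j‖ ^ 2 ≤ c * R := by gcongr; exact hR U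
    simp only [norm_eq]
    refine (expect_exp_mul_norm_add_sum_I_pow_mul_sq_le hc 0 (hcR'.trans_lt hcR)).trans ?_
    rw [norm_zero, zero_pow two_ne_zero, mul_zero, exp_zero, mul_one]
    gcongr
  rw [integral_eq_integral_expect_mul_left integrable_exp g]
  have expect_nonneg (U : UG D) :
      0 ≤ 𝔼 ε, exp (c * ‖∑ j, rotProj (g ε * U) P α j * w j‖ ^ 2) :=
    Finset.expect_nonneg fun _ _ => (exp_pos _).le
  exact (integral_mono_of_nonneg (.of_forall expect_nonneg) (integrable_const _)
    (.of_forall expect_le)).trans_eq (by simp)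

lemma mgf_norm_rotProj_apply_sq_le {μ : Measure (UG D)} [μ.IsMulLeftInvariant]
    [IsProbabilityMeasure μ] {P : Matrix (Fin D) (Fin D) ℂ} (hP : IsStarProjection P) {α β : Fin D}
    (hαβ : α ≠ β) {c : ℝ} (hc : 0 ≤ c) (hcD : c * ((D - 1 : ℝ)⁻¹ / 4) < 1) :
    mgf (fun U => ‖rotProj U P α β‖ ^ 2) μ c ≤ (1 - c * ((D - 1 : ℝ)⁻¹ / 4))⁻¹ := by
  obtain ⟨F, hFα, hFβα, hFβ⟩ := exists_unitaryGroup_flat_row (𝕜 := ℂ) hαβ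
  rw [Fintype.card_fin] at hFβ
  have row_le (U : UG D) :
      ∑ j, ‖rotProj U P α j * conj (F.1 β j)‖ ^ 2 ≤ (D - 1 : ℝ)⁻¹ / 4 := by
    have hD : 0 ≤ (D - 1 : ℝ)⁻¹ := hFβ β hαβ.symm ▸ sq_nonneg _
    calc ∑ j, ‖rotProj U P α j * conj (F.1 β j)‖ ^ 2
        = ∑ j ∈ Finset.univ.erase α, ‖rotProj U P α j * conj (F.1 β j)‖ ^ 2 :=
          (Finset.sum_erase _ (by simp [hFβα])).symm
      _ = ∑ j ∈ Finset.univ.erase α, ‖rotProj U P α j‖ ^ 2 * (D - 1 : ℝ)⁻¹ := by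
          refine Finset.sum_congr rfl fun j hj => ?_
          rw [norm_mul, mul_pow, Complex.norm_conj, hFβ j (Finset.ne_of_mem_erase hj)]
      _ ≤ 1 / 4 * (D - 1 : ℝ)⁻¹ := by
          rw [← Finset.sum_mul]
          gcongr
          exact sum_erase_norm_sq_row_le_of_isStarProjection (isStarProjection_rotProj U hP) α
      _ = (D - 1 : ℝ)⁻¹ / 4 := by ring
  calc mgf (fun U => ‖rotProj U P α β‖ ^ 2) μ c
      = ∫ U, exp (c * ‖rotProj (F * U) P α β‖ ^ 2) ∂μ :=
        (integral_mul_left_eq_self (fun U => exp (c * ‖rotProj U P α β‖ ^ 2)) F).symm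
    _ = ∫ U, exp (c * ‖∑ j, rotProj U P α j * conj (F.1 β j)‖ ^ 2) ∂μ := by
        simp only [rotProj_mul_apply_of_row_eq_single hFα]
    _ ≤ _ := integral_exp_mul_norm_sum_rotProj_mul_sq_le hc row_le hcD

theorem integral_iSup_norm_rotProj_apply_sq_lt (hD : 8 ≤ D) {P : Matrix (Fin D) (Fin D) ℂ}
    (hP : IsStarProjection P) (μ : Measure (UG D)) [μ.IsMulLeftInvariant]
    [IsProbabilityMeasure μ] :
    ∫ U, ⨆ p : {p : Fin D × Fin D // p.1 ≠ p.2}, ‖rotProj U P p.1.1 p.1.2‖ ^ 2 ∂μ <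
      log D / D := by
  have hD' : (8 : ℝ) ≤ D := by exact_mod_cast hD
  have card_eq : (Fintype.card {p : Fin D × Fin D // p.1 ≠ p.2} : ℝ) = D * (D - 1) := by
    rw [Fintype.card_subtype]
    have : (Finset.univ.filter fun p : Fin D × Fin D => p.1 ≠ p.2) = Finset.univ.offDiag := by
      ext; simp
    rw [this, Finset.offDiag_card, Finset.card_fin, Nat.cast_sub (Nat.le_mul_self D)]
    push_cast; ring
  have : Nonempty {p : Fin D × Fin D // p.1 ≠ p.2} := ⟨(⟨0, by omega⟩, ⟨1, by omega⟩), by simp⟩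
  have exponent : 3 * (D - 1 : ℝ) * ((D - 1 : ℝ)⁻¹ / 4) = 3 / 4 := by
    have : (D - 1 : ℝ) ≠ 0 := by linarith
    field_simp
  calc ∫ U, ⨆ p : {p : Fin D × Fin D // p.1 ≠ p.2}, ‖rotProj U P p.1.1 p.1.2‖ ^ 2 ∂μ
      ≤ log (D * (D - 1) * 4) / (3 * (D - 1)) := by
        rw [← card_eq]
        refine integral_iSup_le_log_div (by linarith) (fun _ _ => sq_nonneg _) (fun p => ?_)
          fun p => ?_
        · have := continuous_rotProj_apply P p.1.1 p.1.2
          exact Continuous.integrable_of_hasCompactSupport (by fun_prop) (.of_compactSpace _)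
        · refine (mgf_norm_rotProj_apply_sq_le hP p.2 (by linarith) ?_).trans_eq ?_ <;>
            rw [exponent] <;> norm_num
    _ < log D / D := log_mul_sub_one_mul_four_div_lt hD'

end RotProj

theorem stmt19_general {D : ℕ} (hD : 8 ≤ D) (φ : Fin D → Fin D → ℂ)
    (hφ : ∀ α β, dotc (φ α) (φ β) = if α = β then 1 else 0) {P : Matrix (Fin D) (Fin D) ℂ}
    (hP : IsStarProjection P) (μ : Measure (UG D)) [μ.IsMulLeftInvariant]
    [IsProbabilityMeasure μ] :
    ∫ U, (⨆ α, ⨆ β, ⨆ _ : α ≠ β, ‖dotc (φ α) ((rotProj U P).mulVec (φ β))‖ ^ 2) ∂μ <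
      log D / D := by
  obtain ⟨V, hV⟩ := exists_dotc_mulVec_rotProj_eq hφ
  simp only [hV, iSup_iSup_iSup_prop_eq_iSup_subtype fun _ _ => sq_nonneg _]
  rw [integral_mul_left_eq_self
    (fun U => ⨆ p : {p : Fin D × Fin D // p.1 ≠ p.2}, ‖rotProj U P p.1.1 p.1.2‖ ^ 2) V]
  exact integral_iSup_norm_rotProj_apply_sq_lt hD hP μ

theorem stmt19 (D d : ℕ) (hd : 3 < d) (hD : 2 * d + 2 < D)
    (hlog : Real.log D / D < 1 / 5)
    (φ : Fin D → Fin D → ℂ) (hφ : ∀ α β, dotc (φ α) (φ β) = if α = β then 1 else 0)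
    (s : Finset (Fin D)) (hs : s.card = d)
    (μ : Measure (UG D)) [μ.IsHaarMeasure] [IsProbabilityMeasure μ] :
    (∫ U, (⨆ α, ⨆ β, ⨆ _ : α ≠ β,
        ‖dotc (φ α) ((rotProj U (coordProj D s)).mulVec (φ β))‖ ^ 2) ∂μ)
      < Real.log D / D :=
  stmt19_general (by omega) φ hφ (isStarProjection_coordProj s) μ
end
end
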